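/- arXiv:1801.09188 — 2 statements merged into one kernel-verified Lean document; each statement's English description precedes it below -/
import Mathlib

section
/- Let E = E(J_∅,{n_k},{c_k},{η_{k,j}}) be a homogeneous perfect set with dim_H E = 1. Suppose there exists a constant C ≥ 1 such that max_{1≤l≤n_k−1} η_{k,l} ≤ C · min_{1≤l≤n_k−1} η_{k,l} for all k ≥ 1. Then dim_H f(E) = 1 for every 1-dimensional quasisymmetric mapping f; in particular E is 1-dimensional quasisymmetrically minimal. -/
open Set Filter MeasureTheory
open scoped ENNReal

/-- `σ` is a valid word: the entry at (0-indexed) position `j` lies in `[1, n (j+1)]`,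
so that words of length `k` correspond to indices `(i₁, …, i_k)` with `1 ≤ i_j ≤ n_j`. -/
def ValidWord (n : ℕ → ℕ) (σ : List ℕ) : Prop :=
  ∀ j (h : j < σ.length), 1 ≤ σ.get ⟨j, h⟩ ∧ σ.get ⟨j, h⟩ ≤ n (j + 1)

/-- A homogeneous perfect structure with parameters `n`, `c`, `η` on `J_∅ = [0,1]`:
`a σ` and `b σ` are the left and right endpoints of the basic interval `J_σ = [a σ, b σ]`.
The fields record that `n k ≥ 2`, `0 < c k < 1`, `η k j ≥ 0`, that the children
`J_{σ*1}, …, J_{σ*n_{k+1}}` of `J_σ` (for `σ` of length `k`) are subintervals of `J_σ`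
situated from left to right, that `|J_{σ*i}| = c_{k+1} |J_σ|`, and that the gaps have
the prescribed lengths `η_{k+1,0}, …, η_{k+1,n_{k+1}}`. -/
structure HomogeneousPerfectStructure (n : ℕ → ℕ) (c : ℕ → ℝ) (η : ℕ → ℕ → ℝ) where
  hn : ∀ k, 1 ≤ k → 2 ≤ n k
  hc : ∀ k, 1 ≤ k → 0 < c k ∧ c k < 1
  hη : ∀ k j, 1 ≤ k → j ≤ n k → 0 ≤ η k j
  a : List ℕ → ℝ
  b : List ℕ → ℝ
  root_a : a [] = 0
  root_b : b [] = 1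
  sub_left : ∀ σ, ValidWord n σ → ∀ i, 1 ≤ i → i ≤ n (σ.length + 1) →
    a σ ≤ a (σ ++ [i])
  sub_right : ∀ σ, ValidWord n σ → ∀ i, 1 ≤ i → i ≤ n (σ.length + 1) →
    b (σ ++ [i]) ≤ b σ
  ordered : ∀ σ, ValidWord n σ → ∀ i, 1 ≤ i → i + 1 ≤ n (σ.length + 1) →
    b (σ ++ [i]) ≤ a (σ ++ [i + 1])
  len_eq : ∀ σ, ValidWord n σ → ∀ i, 1 ≤ i → i ≤ n (σ.length + 1) →
    b (σ ++ [i]) - a (σ ++ [i]) = c (σ.length + 1) * (b σ - a σ)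
  gap_left : ∀ σ, ValidWord n σ →
    a (σ ++ [1]) - a σ = η (σ.length + 1) 0
  gap_right : ∀ σ, ValidWord n σ →
    b σ - b (σ ++ [n (σ.length + 1)]) = η (σ.length + 1) (n (σ.length + 1))
  gap_mid : ∀ σ, ValidWord n σ → ∀ i, 1 ≤ i → i ≤ n (σ.length + 1) - 1 →
    a (σ ++ [i + 1]) - b (σ ++ [i]) = η (σ.length + 1) i

namespace HomogeneousPerfectStructure

variable {n : ℕ → ℕ} {c : ℕ → ℝ} {η : ℕ → ℕ → ℝ}

/-- `E_k`, the union of the basic intervals of order `k`. -/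
def Ek (S : HomogeneousPerfectStructure n c η) (k : ℕ) : Set ℝ :=
  ⋃ σ ∈ {σ : List ℕ | ValidWord n σ ∧ σ.length = k}, Icc (S.a σ) (S.b σ)

/-- The homogeneous perfect set `E = ⋂_{k ≥ 0} E_k`. -/
def E (S : HomogeneousPerfectStructure n c η) : Set ℝ := ⋂ k, S.Ek k

end HomogeneousPerfectStructure

/-- `max_{1 ≤ l ≤ n_k - 1} η_{k,l}`. -/
noncomputable def etaMax (n : ℕ → ℕ) (η : ℕ → ℕ → ℝ) (k : ℕ) : ℝ :=
  sSup (η k '' {l | 1 ≤ l ∧ l ≤ n k - 1})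

/-- `min_{1 ≤ l ≤ n_k - 1} η_{k,l}`. -/
noncomputable def etaMin (n : ℕ → ℕ) (η : ℕ → ℕ → ℝ) (k : ℕ) : ℝ :=
  sInf (η k '' {l | 1 ≤ l ∧ l ≤ n k - 1})

/-- A homeomorphism `f : ℝ → ℝ` is a 1-dimensional quasisymmetric mapping if there is a
homeomorphism `η : [0,∞) → [0,∞)` such that
`|f x - f a| / |f x - f b| ≤ η (|x - a| / |x - b|)` for all triples of distinct points. -/
def IsQuasisymmetric (f : ℝ ≃ₜ ℝ) : Prop :=
  ∃ h : (Set.Ici (0 : ℝ)) ≃ₜ (Set.Ici (0 : ℝ)),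
    ∀ a b x : ℝ, x ≠ a → x ≠ b → a ≠ b →
      |f x - f a| / |f x - f b| ≤
        (h ⟨|x - a| / |x - b|, Set.mem_Ici.mpr (div_nonneg (abs_nonneg _) (abs_nonneg _))⟩ : ℝ)


structure QSF (F : ℝ → ℝ) (H : ℝ) : Prop where
  mono : StrictMono F
  H1 : 1 ≤ H
  dr : ∀ x r, 0 < r → F (x + 2 * r) - F x ≤ H * (F (x + r) - F x)
  dl : ∀ x r, 0 < r → F x - F (x - 2 * r) ≤ H * (F x - F (x - r))
  sr : ∀ ε, 0 < ε → ∃ θ, 0 < θ ∧ ∀ u v w, u < v → v ≤ w → w - v ≤ θ * (v - u) →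
    F w - F v ≤ ε * (F v - F u)
  sl : ∀ ε, 0 < ε → ∃ θ, 0 < θ ∧ ∀ u v w, u ≤ v → v < w → v - u ≤ θ * (w - v) →
    F v - F u ≤ ε * (F w - F v)

namespace QSF

variable {F : ℝ → ℝ} {H : ℝ}

lemma flip (hF : QSF F H) : QSF (fun x => - F (-x)) H where
  mono := fun x y h => by
    have := hF.mono (neg_lt_neg h)
    simpa using this
  H1 := hF.H1
  dr := fun x r hr => by
    have := hF.dl (-x) r hr
    have e1 : -(x + 2 * r) = -x - 2 * r := by ring
    have e2 : -(x + r) = -x - r := by ring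
    simp only [e1, e2]
    linarith
  dl := fun x r hr => by
    have := hF.dr (-x) r hr
    have e1 : -(x - 2 * r) = -x + 2 * r := by ring
    have e2 : -(x - r) = -x + r := by ring
    simp only [e1, e2]
    linarith
  sr := fun ε hε => by
    obtain ⟨θ, h0, h⟩ := hF.sl ε hε
    refine ⟨θ, h0, fun u v w h1 h2 h3 => ?_⟩
    have := h (-w) (-v) (-u) (by linarith) (by linarith) (by linarith)
    linarith
  sl := fun ε hε => by
    obtain ⟨θ, h0, h⟩ := hF.sr ε hε
    refine ⟨θ, h0, fun u v w h1 h2 h3 => ?_⟩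
    have := h (-w) (-v) (-u) (by linarith) (by linarith) (by linarith)
    linarith

lemma drPow (hF : QSF F H) (m : ℕ) : ∀ x r, 0 < r →
    F (x + 2 ^ m * r) - F x ≤ H ^ m * (F (x + r) - F x) := by
  induction m with
  | zero => intro x r _; simp
  | succ m ih =>
    intro x r hr
    have h1 := hF.dr x (2 ^ m * r) (by positivity)
    have h2 := ih x r hr
    have h3 := mul_le_mul_of_nonneg_left h2 (zero_le_one.trans hF.H1)
    have e : x + 2 ^ (m + 1) * r = x + 2 * (2 ^ m * r) := by ring
    rw [e, pow_succ]
    linarith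

/-- adjacent interval on the right, of length at most `2^m` times -/
lemma adjR (hF : QSF F H) (m : ℕ) {a b c : ℝ} (hab : a < b) (hc : c - b ≤ 2 ^ m * (b - a)) :
    F c - F b ≤ H ^ (m + 1) * (F b - F a) := by
  have h1 := hF.drPow (m + 1) a (b - a) (by linarith)
  have e : a + (b - a) = b := by ring
  rw [e] at h1
  have hp : (1 : ℝ) ≤ 2 ^ m := one_le_pow₀ (by norm_num)
  have h2 : c ≤ a + 2 ^ (m + 1) * (b - a) := by
    have : (2 : ℝ) ^ (m + 1) = 2 ^ m + 2 ^ m := by ring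
    rw [this]
    nlinarith
  have h3 := hF.mono.monotone h2
  have h4 := hF.mono hab
  linarith

lemma adjL (hF : QSF F H) (m : ℕ) {a b c : ℝ} (hab : b < c) (hc : b - a ≤ 2 ^ m * (c - b)) :
    F b - F a ≤ H ^ (m + 1) * (F c - F b) := by
  have := hF.flip.adjR m (a := -c) (b := -b) (c := -a) (by linarith) (by linarith)
  simp only [neg_neg] at this
  linarith

lemma halve (hF : QSF F H) : ∃ θ, 0 < θ ∧ θ < 1 ∧ ∀ x y u v, u ≤ x → x < y → y ≤ v →
    2 * (y - x) ≤ v - u → F y - F x ≤ θ * (F v - F u) := by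
  have hH := hF.H1
  have hH2 : 0 < H ^ 2 := by positivity
  refine ⟨H ^ 2 / (1 + H ^ 2), by positivity, by rw [div_lt_one (by positivity)]; linarith, ?_⟩
  intro x y u v hu hxy hv h2
  have hux := hF.mono.monotone hu
  have hyv := hF.mono.monotone hv
  have key : F y - F x ≤ H ^ 2 * ((F v - F u) - (F y - F x)) := by
    rcases le_or_gt ((y - x) / 2) (v - y) with h | h
    · have h3 := hF.adjL 1 (a := x) (b := y) (c := v) (by linarith) (by linarith)
      norm_num at h3
      nlinarith
    · have h3 := hF.adjR 1 (a := u) (b := x) (c := y) (by linarith) (by linarith)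
      norm_num at h3
      nlinarith
  rw [div_mul_eq_mul_div, le_div_iff₀ (by positivity)]
  linarith

lemma decayPow {θ : ℝ} (hθ : 0 < θ) (hh : ∀ x y u v, u ≤ x → x < y → y ≤ v →
    2 * (y - x) ≤ v - u → F y - F x ≤ θ * (F v - F u)) (hm : StrictMono F) (m : ℕ) :
    ∀ x y u v, u ≤ x → x < y → y ≤ v →
    2 ^ m * (y - x) ≤ v - u → F y - F x ≤ θ ^ m * (F v - F u) := by
  induction m with
  | zero =>
    intro x y u v h1 h2 h3 h4
    have := hm.monotone h1
    have := hm.monotone h3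
    simp; linarith
  | succ m ih =>
    intro x y u v h1 h2 h3 h4
    have hp : (1 : ℝ) ≤ 2 ^ m := one_le_pow₀ (by norm_num)
    have h5 : 2 ^ m * (2 * (y - x)) ≤ v - u := by
      calc _ = 2 ^ (m + 1) * (y - x) := by ring
        _ ≤ _ := h4
    have h6 : 2 * (y - x) ≤ v - u := by nlinarith
    obtain ⟨x', e1, e2, e3, e4⟩ : ∃ x', u ≤ x' ∧ x' ≤ x ∧ y ≤ x' + 2 * (y - x) ∧
        x' + 2 * (y - x) ≤ v := by
      rcases le_total u (x - (y - x)) with h | h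
      · exact ⟨x - (y - x), h, by linarith, by linarith, by linarith⟩
      · exact ⟨u, le_refl _, h1, by linarith, by linarith⟩
    have h7 := ih x' (x' + 2 * (y - x)) u v e1 (by linarith) e4 (by
      have : x' + 2 * (y - x) - x' = 2 * (y - x) := by ring
      rw [this]; exact h5)
    have h8 := hh x y x' (x' + 2 * (y - x)) e2 h2 e3 (by linarith)
    calc _ ≤ _ := h8
      _ ≤ θ * (θ ^ m * (F v - F u)) := mul_le_mul_of_nonneg_left h7 hθ.le
      _ = _ := by ring

lemma decay (hF : QSF F H) : ∃ q : ℝ, 0 < q ∧ ∀ n : ℕ, 2 ≤ n → ∀ x y u v : ℝ, u ≤ x → x < y → y ≤ v →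
    n * (y - x) ≤ v - u → F y - F x ≤ (n : ℝ) ^ (-q) * (F v - F u) := by
  obtain ⟨θ, h0, h1, hh⟩ := hF.halve
  have hl4 : 0 < Real.log 4 := Real.log_pos (by norm_num)
  have hlθ : Real.log θ < 0 := Real.log_neg h0 h1
  refine ⟨-Real.log θ / Real.log 4, div_pos (by linarith) hl4, ?_⟩
  intro n hn x y u v e1 e2 e3 e4
  have hp := Nat.pow_log_le_self 2 (x := n) (by omega)
  have hp2 := Nat.lt_pow_succ_log_self (b := 2) (by norm_num) n
  have hm : 1 ≤ Nat.log 2 n := Nat.log_pos (by norm_num) hn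
  set m := Nat.log 2 n
  have hpR : (2 : ℝ) ^ m ≤ n := by exact_mod_cast hp
  have h5 := decayPow h0 hh hF.mono m x y u v e1 e2 e3
    (le_trans (mul_le_mul_of_nonneg_right hpR (by linarith)) e4)
  have hVU : 0 ≤ F v - F u := by
    have := hF.mono.monotone (show u ≤ v by linarith)
    linarith
  refine h5.trans (mul_le_mul_of_nonneg_right ?_ hVU)
  have hn4 : (n : ℝ) ≤ 4 ^ m := by
    have : n ≤ 4 ^ m := by
      calc n ≤ 2 ^ (m + 1) := hp2.le
        _ ≤ 2 ^ (2 * m) := Nat.pow_le_pow_right (by norm_num) (by omega)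
        _ = 4 ^ m := by rw [pow_mul]; norm_num
    exact_mod_cast this
  have hn0 : (0 : ℝ) < n := by exact_mod_cast (by omega : 0 < n)
  have hθ4 : θ = (4 : ℝ) ^ (Real.log θ / Real.log 4) := by
    rw [Real.rpow_def_of_pos (by norm_num), mul_div_cancel₀ _ hl4.ne', Real.exp_log h0]
  calc θ ^ m = ((4 : ℝ) ^ m) ^ (- (-Real.log θ / Real.log 4)) := by
        conv_lhs => rw [hθ4]
        rw [← Real.rpow_natCast, ← Real.rpow_natCast, ← Real.rpow_mul (by norm_num),
          ← Real.rpow_mul (by norm_num)]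
        congr 1; ring
    _ ≤ _ := Real.rpow_le_rpow_of_nonpos hn0 hn4 (by
        rw [neg_div, neg_neg]; exact (div_neg_of_neg_of_pos hlθ hl4).le)

lemma gapR (hF : QSF F H) {C γ : ℝ} (hC : 1 ≤ C) (hγ : 0 < γ) : ∃ A : ℝ, 0 ≤ A ∧
    ∀ A' : ℝ, A ≤ A' → ∀ u, 1 ≤ u → ∀ a b c,
    a < b → b ≤ c → c - b ≤ 2 * C * (u - 1) * (b - a) →
    F c - F b ≤ ((2 : ℝ) ^ γ * u ^ A' - 1) / 2 * (F b - F a) := by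
  have hg : 1 < (2 : ℝ) ^ γ := Real.one_lt_rpow (by norm_num) hγ
  obtain ⟨θ, h0, hθ⟩ := hF.sr (((2 : ℝ) ^ γ - 1) / 2) (by linarith)
  have hH := hF.H1
  -- polynomial bound
  set p := Real.logb 2 H with hp
  have hp0 : 0 ≤ p := Real.logb_nonneg (by norm_num) hH
  set K := 1 + 2 * (H ^ 2 * (2 * C) ^ p) with hK
  have hK1 : 1 ≤ K := by
    have : 0 ≤ H ^ 2 * (2 * C) ^ p := by positivity
    linarith
  set t := 1 + θ / (2 * C) with ht
  have ht1 : 1 < t := by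
    have : 0 < θ / (2 * C) := by positivity
    linarith
  set s := Real.logb t K with hs
  have hs0 : 0 ≤ s := Real.logb_nonneg ht1 hK1
  refine ⟨p + s, by positivity, ?_⟩
  intro A' hA u hu a b c hab hbc hcb
  have hba := sub_pos.2 (hF.mono hab)
  have hA0 : 0 ≤ A' := le_trans (by positivity) hA
  have huA : 1 ≤ u ^ A' := Real.one_le_rpow hu hA0
  rcases le_or_gt u t with h | h
  · have h1 : 2 * C * (u - 1) ≤ θ := by
      have : u - 1 ≤ θ / (2 * C) := by linarith
      rw [le_div_iff₀ (by positivity)] at this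
      linarith
    have h2 := hθ a b c hab hbc (hcb.trans (mul_le_mul_of_nonneg_right h1 (by linarith)))
    refine h2.trans (mul_le_mul_of_nonneg_right ?_ hba.le)
    have : (2 : ℝ) ^ γ ≤ 2 ^ γ * u ^ A' := le_mul_of_one_le_right (by linarith) huA
    linarith
  · set X := 2 * C * u with hX
    have hX1 : 1 ≤ X := by nlinarith
    have hlX : 0 ≤ Real.logb 2 X := Real.logb_nonneg (by norm_num) hX1
    set m := ⌈Real.logb 2 X⌉₊ with hm
    have hm1 : Real.logb 2 X ≤ m := Nat.le_ceil _
    have hm2 : (m : ℝ) < Real.logb 2 X + 1 := Nat.ceil_lt_add_one hlX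
    have hXm : X ≤ 2 ^ m := by
      rw [Real.logb_le_iff_le_rpow (by norm_num) (by linarith)] at hm1
      exact_mod_cast hm1
    have h2 := hF.adjR m hab (c := c) (hcb.trans (mul_le_mul_of_nonneg_right
      (by nlinarith) (by linarith)))
    refine h2.trans (mul_le_mul_of_nonneg_right ?_ hba.le)
    have h3 : H ^ (m + 1) ≤ H ^ 2 * X ^ p := by
      have e : X ^ p = H ^ (Real.logb 2 X) := by
        rw [Real.rpow_def_of_pos (by linarith), Real.rpow_def_of_pos (by linarith), hp]
        simp only [Real.logb]
        congr 1; ring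
      rw [e, ← Real.rpow_natCast, ← Real.rpow_natCast, ← Real.rpow_add (by linarith)]
      apply Real.rpow_le_rpow_of_exponent_le hH
      push_cast; linarith
    have h4 : X ^ p = (2 * C) ^ p * u ^ p := Real.mul_rpow (by linarith) (by linarith)
    have hup : 1 ≤ u ^ p := Real.one_le_rpow hu hp0
    have h5 : 1 + 2 * H ^ (m + 1) ≤ K * u ^ p := by
      rw [h4] at h3
      rw [hK]; nlinarith
    have h6 : K ≤ u ^ s := by
      calc K = t ^ s := by rw [hs, Real.rpow_logb (by linarith) ht1.ne' (by linarith)]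
        _ ≤ u ^ s := Real.rpow_le_rpow (by linarith) h.le hs0
    have h7 : 1 + 2 * H ^ (m + 1) ≤ u ^ A' := by
      calc _ ≤ K * u ^ p := h5
        _ ≤ u ^ s * u ^ p := mul_le_mul_of_nonneg_right h6 (by linarith)
        _ = u ^ (p + s) := by rw [← Real.rpow_add (by linarith), add_comm]
        _ ≤ _ := Real.rpow_le_rpow_of_exponent_le hu hA
    have : u ^ A' ≤ 2 ^ γ * u ^ A' := le_mul_of_one_le_left (by linarith) hg.le
    linarith

lemma gap (hF : QSF F H) {C γ : ℝ} (hC : 1 ≤ C) (hγ : 0 < γ) : ∃ A : ℝ, 0 ≤ A ∧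
    ∀ u, 1 ≤ u → (∀ a b c,
    a < b → b ≤ c → c - b ≤ 2 * C * (u - 1) * (b - a) →
    F c - F b ≤ ((2 : ℝ) ^ γ * u ^ A - 1) / 2 * (F b - F a)) ∧ (∀ a b c,
    a ≤ b → b < c → b - a ≤ 2 * C * (u - 1) * (c - b) →
    F b - F a ≤ ((2 : ℝ) ^ γ * u ^ A - 1) / 2 * (F c - F b)) := by
  obtain ⟨A, hA, h⟩ := hF.gapR hC hγ
  obtain ⟨A', hA', h'⟩ := hF.flip.gapR hC hγ
  refine ⟨max A A', le_max_of_le_left hA, fun u hu => ⟨h _ (le_max_left _ _) u hu, ?_⟩⟩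
  intro a b c h1 h2 h3
  have := h' _ (le_max_right A A') u hu (-c) (-b) (-a) (by linarith) (by linarith) (by linarith)
  simp only [neg_neg] at this
  linarith

end QSF

/-- valid reversed words -/
def VL (m : ℕ → ℕ) : List ℕ → Prop
  | [] => True
  | j :: L => VL m L ∧ 1 ≤ j ∧ j ≤ m L.length

structure HTree (m : ℕ → ℕ) (A B : List ℕ → ℝ) (D : ℕ → ℝ) : Prop where
  hm : ∀ k, 2 ≤ m k
  D0 : ∀ k, 0 < D k
  len : ∀ L, VL m L → B L - A L = D L.length
  left : ∀ L, VL m L → A L ≤ A (1 :: L)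
  right : ∀ L, VL m L → B (m L.length :: L) ≤ B L
  mid : ∀ L, VL m L → ∀ j, 1 ≤ j → j + 1 ≤ m L.length → B (j :: L) ≤ A ((j + 1) :: L)

def cellPt (m : ℕ → ℕ) (A B : List ℕ → ℝ) (L : List ℕ) (j : ℕ) : ℝ :=
  if j ≤ 1 then A L else if j ≤ m L.length then A (j :: L) else B L

noncomputable def KK (m : ℕ → ℕ) (A B : List ℕ → ℝ) (F : ℝ → ℝ) : List ℕ → ℝ × ℝ
  | [] => (0, 1)
  | j :: L =>
    ((KK m A B F L).1 + ((KK m A B F L).2 - (KK m A B F L).1) *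
      ((F (cellPt m A B L j) - F (A L)) / (F (B L) - F (A L))),
     (KK m A B F L).1 + ((KK m A B F L).2 - (KK m A B F L).1) *
      ((F (cellPt m A B L (j + 1)) - F (A L)) / (F (B L) - F (A L))))

/-- an infinite branch -/
structure Addr (m : ℕ → ℕ) (L : ℕ → List ℕ) : Prop where
  zero : L 0 = []
  succ : ∀ k, ∃ j, 1 ≤ j ∧ j ≤ m k ∧ L (k + 1) = j :: L k

namespace Addr
variable {m : ℕ → ℕ} {L : ℕ → List ℕ}

lemma length (h : Addr m L) (k : ℕ) : (L k).length = k := by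
  induction k with
  | zero => rw [h.zero]; rfl
  | succ k ih =>
    obtain ⟨j, _, _, e⟩ := h.succ k
    rw [e, List.length_cons, ih]

lemma valid (h : Addr m L) (k : ℕ) : VL m (L k) := by
  induction k with
  | zero => rw [h.zero]; trivial
  | succ k ih =>
    obtain ⟨j, h1, h2, e⟩ := h.succ k
    rw [e]
    exact ⟨ih, h1, by rw [h.length k]; exact h2⟩

end Addr

namespace HTree

variable {m : ℕ → ℕ} {A B : List ℕ → ℝ} {D : ℕ → ℝ}

lemma AB (T : HTree m A B D) {L : List ℕ} (h : VL m L) : A L < B L := by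
  have := T.len L h
  have := T.D0 L.length
  linarith

lemma pt_mono (T : HTree m A B D) {L : List ℕ} (h : VL m L) : Monotone (cellPt m A B L) := by
  apply monotone_nat_of_le_succ
  intro j
  have hm := T.hm L.length
  unfold cellPt
  rcases Nat.lt_or_ge j 2 with hj | hj
  · rw [if_pos (by omega)]
    split_ifs with h1 h2
    · exact le_refl _
    · have : j = 1 := by omega
      subst this
      have e1 := T.left L h
      have e2 := T.AB (L := 1 :: L) ⟨h, by omega, by omega⟩
      have e3 := T.mid L h 1 (le_refl _) hm
      linarith
    · omega
  · rw [if_neg (show ¬ j ≤ 1 by omega), if_neg (show ¬ j + 1 ≤ 1 by omega)]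
    split_ifs with h1 h2
    · have e2 := T.AB (L := j :: L) ⟨h, by omega, by omega⟩
      have e3 := T.mid L h j (by omega) h2
      linarith
    · have : j = m L.length := by omega
      have e2 := T.AB (L := j :: L) ⟨h, by omega, by omega⟩
      have e3 := T.right L h
      rw [← this] at e3
      linarith
    · omega
    · exact le_refl _

lemma pt_one (L : List ℕ) : cellPt m A B L 1 = A L := by simp [cellPt]

lemma pt_last (T : HTree m A B D) (L : List ℕ) : cellPt m A B L (m L.length + 1) = B L := by
  have hm := T.hm L.length
  unfold cellPt
  rw [if_neg (by omega), if_neg (by omega)]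

lemma pt_mid {L : List ℕ} {j : ℕ} (h1 : 1 < j) (h2 : j ≤ m L.length) :
    cellPt m A B L j = A (j :: L) := by
  unfold cellPt
  rw [if_neg (by omega), if_pos (by omega)]

lemma pt_le (T : HTree m A B D) {L : List ℕ} (h : VL m L) {j : ℕ} (h1 : 1 ≤ j)
    (h2 : j ≤ m L.length) : cellPt m A B L j ≤ A (j :: L) := by
  rcases Nat.lt_or_ge 1 j with h3 | h3
  · rw [pt_mid h3 h2]
  · have : j = 1 := by omega
    subst this
    rw [pt_one]; exact T.left L h

lemma le_pt (T : HTree m A B D) {L : List ℕ} (h : VL m L) {j : ℕ} (h1 : 1 ≤ j)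
    (h2 : j ≤ m L.length) : B (j :: L) ≤ cellPt m A B L (j + 1) := by
  rcases Nat.lt_or_ge j (m L.length) with h3 | h3
  · rw [pt_mid (by omega) h3]; exact T.mid L h j h1 h3
  · have : j = m L.length := by omega
    subst this
    rw [T.pt_last]; exact T.right L h

lemma A_le_pt (T : HTree m A B D) {L : List ℕ} (h : VL m L) {j : ℕ} (h1 : 1 ≤ j) :
    A L ≤ cellPt m A B L j := by
  rw [← pt_one (m := m) (A := A) (B := B)]; exact T.pt_mono h h1

lemma pt_le_B (T : HTree m A B D) {L : List ℕ} (h : VL m L) {j : ℕ} (h1 : j ≤ m L.length + 1) :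
    cellPt m A B L j ≤ B L := by
  rw [← T.pt_last L]; exact T.pt_mono h h1

lemma A_le (T : HTree m A B D) {L : List ℕ} {j : ℕ} (h : VL m (j :: L)) : A L ≤ A (j :: L) :=
  (T.A_le_pt h.1 h.2.1).trans (T.pt_le h.1 h.2.1 h.2.2)

lemma le_B (T : HTree m A B D) {L : List ℕ} {j : ℕ} (h : VL m (j :: L)) : B (j :: L) ≤ B L :=
  (T.le_pt h.1 h.2.1 h.2.2).trans (T.pt_le_B h.1 (by have := h.2.2; omega))

lemma pt_grow (T : HTree m A B D) {L : List ℕ} (h : VL m L) (j : ℕ) (hj : j ≤ m L.length) :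
    A L + j * D (L.length + 1) ≤ cellPt m A B L (j + 1) := by
  induction j with
  | zero => simp [pt_one]
  | succ j ih =>
    have e1 := ih (by omega)
    have e2 := T.pt_le h (j := j + 1) (by omega) hj
    have e3 := T.le_pt h (j := j + 1) (by omega) hj
    have e4 := T.len ((j + 1) :: L) ⟨h, by omega, hj⟩
    rw [List.length_cons] at e4
    push_cast
    linarith

lemma mD (T : HTree m A B D) {L : List ℕ} (h : VL m L) :
    m L.length * D (L.length + 1) ≤ D L.length := by
  have e1 := T.pt_grow h (m L.length) (le_refl _)
  have e2 := T.len L h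
  rw [T.pt_last] at e1
  linarith

section K

variable {F : ℝ → ℝ}

lemma K_lo_one (L : List ℕ) : (KK m A B F (1 :: L)).1 = (KK m A B F L).1 := by
  simp [KK, pt_one]

lemma K_hi_last (T : HTree m A B D) (hF : StrictMono F) {L : List ℕ} (h : VL m L) :
    (KK m A B F (m L.length :: L)).2 = (KK m A B F L).2 := by
  have := hF (T.AB h)
  simp only [KK]
  rw [T.pt_last, div_self (by linarith)]
  ring

lemma K_pos (T : HTree m A B D) (hF : StrictMono F) : ∀ L, VL m L →
    (KK m A B F L).1 ≤ (KK m A B F L).2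
  | [], _ => by simp [KK]
  | j :: L, h => by
    have ih := K_pos T hF L h.1
    have := hF (T.AB h.1)
    have h2 := hF.monotone (T.pt_mono h.1 (Nat.le_succ j))
    simp only [KK]
    gcongr

/-- increments of `K` along cells are Hölder controlled -/
lemma K_incr (T : HTree m A B D) (hF : StrictMono F) {L : List ℕ} (h : VL m L) {M d : ℝ}
    (hd1 : d < 1)
    (hK : (KK m A B F L).2 - (KK m A B F L).1 ≤ M * (F (B L) - F (A L)) ^ d)
    {p q : ℝ} (h1 : A L ≤ p) (h2 : p < q) (h3 : q ≤ B L) :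
    ((KK m A B F L).2 - (KK m A B F L).1) * ((F q - F p) / (F (B L) - F (A L)))
      ≤ M * (F q - F p) ^ d := by
  have hY := sub_pos.2 (hF (T.AB h))
  have hX := sub_pos.2 (hF h2)
  have hXY : F q - F p ≤ F (B L) - F (A L) := by
    have := hF.monotone h1
    have := hF.monotone h3
    linarith
  have hM : 0 ≤ M := by
    have h0 := sub_nonneg.2 (T.K_pos hF L h)
    by_contra hneg
    push Not at hneg
    have := mul_neg_of_neg_of_pos hneg (Real.rpow_pos_of_pos hY d)
    linarith
  set X := F q - F p
  set Y := F (B L) - F (A L)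
  calc _ ≤ M * Y ^ d * (X / Y) := mul_le_mul_of_nonneg_right hK (by positivity)
    _ ≤ M * Y ^ d * (X / Y) ^ d := by
        apply mul_le_mul_of_nonneg_left _ (by positivity)
        have := Real.rpow_le_rpow_of_exponent_ge (x := X / Y) (by positivity)
          ((div_le_one hY).2 hXY) hd1.le
        simpa using this
    _ = M * X ^ d := by
        rw [Real.div_rpow hX.le hY.le]
        have := (Real.rpow_pos_of_pos hY d).ne'
        field_simp

lemma D_half (T : HTree m A B D) {L : List ℕ} (h : VL m L) :
    2 * D (L.length + 1) ≤ D L.length := by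
  have h1 := T.mD h
  have h2 : (2 : ℝ) ≤ m L.length := by exact_mod_cast T.hm L.length
  have := T.D0 (L.length + 1)
  nlinarith

lemma F_decay (T : HTree m A B D) (hF : StrictMono F) {θ : ℝ} (h0 : 0 < θ)
    (hθ : ∀ x y u v, u ≤ x → x < y → y ≤ v →
    2 * (y - x) ≤ v - u → F y - F x ≤ θ * (F v - F u)) : ∀ L, VL m L →
    F (B L) - F (A L) ≤ θ ^ L.length * (F (B []) - F (A []))
  | [], _ => by simp
  | j :: L, h => by
    have ih := F_decay T hF h0 hθ L h.1
    have h1 := T.len _ h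
    have h2 := T.len _ h.1
    have h3 := T.D_half h.1
    rw [List.length_cons] at *
    have := hθ (A (j :: L)) (B (j :: L)) (A L) (B L) (T.A_le h) (T.AB h) (T.le_B h) (by linarith)
    calc _ ≤ _ := this
      _ ≤ θ * (θ ^ L.length * (F (B []) - F (A []))) := mul_le_mul_of_nonneg_left ih h0.le
      _ = _ := by ring

lemma K_tendsto (T : HTree m A B D) {H M d : ℝ} (hF : QSF F H) (hd : 0 < d)
    (hK : ∀ L, VL m L → (KK m A B F L).2 - (KK m A B F L).1 ≤ M * (F (B L) - F (A L)) ^ d)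
    {L : ℕ → List ℕ} (hL : Addr m L) :
    Tendsto (fun k => (KK m A B F (L k)).2 - (KK m A B F (L k)).1) atTop (nhds 0) := by
  obtain ⟨θ, h0, h1, hθ⟩ := hF.halve
  have hM : 0 ≤ M := by
    have := hK [] trivial
    have h2 := Real.rpow_pos_of_pos (sub_pos.2 (hF.mono (T.AB (L := []) trivial))) d
    simp only [KK] at this
    by_contra hneg
    push Not at hneg
    have := mul_neg_of_neg_of_pos hneg h2
    linarith
  have hlim : Tendsto (fun k : ℕ => M * (θ ^ k * (F (B []) - F (A []))) ^ d) atTop (nhds 0) := by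
    have e1 := (tendsto_pow_atTop_nhds_zero_of_lt_one h0.le h1).mul_const (F (B []) - F (A []))
    rw [zero_mul] at e1
    have e2 := (e1.rpow_const (p := d) (Or.inr hd.le)).const_mul M
    rwa [Real.zero_rpow hd.ne', mul_zero] at e2
  refine squeeze_zero (fun k => sub_nonneg.2 (T.K_pos hF.mono _ (hL.valid k))) (fun k => ?_) hlim
  refine (hK _ (hL.valid k)).trans (mul_le_mul_of_nonneg_left ?_ hM)
  have e := T.F_decay hF.mono h0 hθ (L k) (hL.valid k)
  rw [hL.length] at e
  exact Real.rpow_le_rpow (sub_nonneg.2 (hF.mono (T.AB (hL.valid k))).le) e hd.le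

end K

end HTree

namespace HTree

variable {m : ℕ → ℕ} {A B : List ℕ → ℝ} {D : ℕ → ℝ} {F : ℝ → ℝ} {H M d : ℝ}

/-- The Hölder hypothesis on the image intervals. -/
def KHol (m : ℕ → ℕ) (A B : List ℕ → ℝ) (F : ℝ → ℝ) (M d : ℝ) : Prop :=
  ∀ L, VL m L → (KK m A B F L).2 - (KK m A B F L).1 ≤ M * (F (B L) - F (A L)) ^ d

lemma M_nonneg (T : HTree m A B D) (hF : QSF F H) (hK : KHol m A B F M d) : 0 ≤ M := by
  have := hK [] trivial
  have h2 := Real.rpow_pos_of_pos (sub_pos.2 (hF.mono (T.AB (L := []) trivial))) d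
  simp only [KK] at this
  by_contra hneg
  push Not at hneg
  have := mul_neg_of_neg_of_pos hneg h2
  linarith

lemma rightEst0 (T : HTree m A B D) (hF : QSF F H) (hd : 0 < d) (hd1 : d < 1)
    (hK : KHol m A B F M d) {L : List ℕ} {j : ℕ} (h : VL m (j :: L)) (hj : j + 1 ≤ m L.length)
    {x y : ℝ} (hx1 : A (j :: L) ≤ x) (hx2 : x ≤ B (j :: L)) (hy : (KK m A B F (j :: L)).1 ≤ y) :
    (KK m A B F L).2 - y ≤ M * (1 + H ^ d) * (F (B L) - F x) ^ d := by
  have hM := T.M_nonneg hF hK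
  have hH := hF.H1
  have hY := sub_pos.2 (hF.mono (T.AB h.1))
  have hv' : VL m ((j + 1) :: L) := ⟨h.1, by omega, hj⟩
  have e1 := T.mid L h.1 j h.2.1 hj
  have e2 := T.AB hv'
  have e3 := T.le_B hv'
  have l1 := T.len _ h
  have l2 := T.len _ hv'
  rw [List.length_cons] at l1 l2
  have hD := T.D0 (L.length + 1)
  have i1 := T.K_incr hF.mono h.1 hd1 (hK L h.1) (T.A_le hv') (lt_of_lt_of_le e2 e3) (le_refl _)
  have k1 : (KK m A B F L).2 - (KK m A B F (j :: L)).2 = ((KK m A B F L).2 - (KK m A B F L).1) *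
      ((F (B L) - F (A ((j + 1) :: L))) / (F (B L) - F (A L))) := by
    have := h.2.1
    simp only [KK]
    rw [pt_mid (by omega) hj]
    field_simp
    ring
  have i2 := hK _ h
  have d1 := hF.dl (x + D (L.length + 1)) (D (L.length + 1)) hD
  have s1 : x + D (L.length + 1) - 2 * D (L.length + 1) = x - D (L.length + 1) := by ring
  have s2 : x + D (L.length + 1) - D (L.length + 1) = x := by ring
  rw [s1, s2] at d1
  have f1 := hF.mono.monotone (show B (j :: L) ≤ x + D (L.length + 1) by linarith)
  have f2 := hF.mono.monotone (show x - D (L.length + 1) ≤ A (j :: L) by linarith)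
  have f3 := hF.mono.monotone (show x + D (L.length + 1) ≤ B L by linarith)
  have f4 := hF.mono.monotone (show x ≤ A ((j + 1) :: L) by linarith)
  have f5 := hF.mono (show A ((j + 1) :: L) < B L by linarith)
  have f6 := hF.mono (T.AB h)
  have g1 : F (B (j :: L)) - F (A (j :: L)) ≤ H * (F (B L) - F x) := by nlinarith
  have g2 : (F (B (j :: L)) - F (A (j :: L))) ^ d ≤ H ^ d * (F (B L) - F x) ^ d := by
    rw [← Real.mul_rpow (by linarith) (by linarith)]
    exact Real.rpow_le_rpow (by linarith) g1 hd.le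
  have g3 : (F (B L) - F (A ((j + 1) :: L))) ^ d ≤ (F (B L) - F x) ^ d :=
    Real.rpow_le_rpow (by linarith) (by linarith) hd.le
  have g4 := mul_le_mul_of_nonneg_left g2 hM
  have g5 := mul_le_mul_of_nonneg_left g3 hM
  linarith

lemma leftEst0 (T : HTree m A B D) (hF : QSF F H) (hd : 0 < d) (hd1 : d < 1)
    (hK : KHol m A B F M d) {L : List ℕ} {j : ℕ} (h : VL m (j :: L)) (hj : 1 < j)
    {x y : ℝ} (hx1 : A (j :: L) ≤ x) (hx2 : x ≤ B (j :: L)) (hy : y ≤ (KK m A B F (j :: L)).2) :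
    y - (KK m A B F L).1 ≤ M * (1 + H ^ d) * (F x - F (A L)) ^ d := by
  have hM := T.M_nonneg hF hK
  have hH := hF.H1
  have hY := sub_pos.2 (hF.mono (T.AB h.1))
  have hm := T.hm L.length
  have hv' : VL m (1 :: L) := ⟨h.1, by omega, by omega⟩
  have e1 : B (1 :: L) ≤ A (j :: L) := by
    rw [← pt_mid (m := m) (A := A) (B := B) hj h.2.2]
    exact (T.le_pt h.1 (le_refl _) (by omega)).trans (T.pt_mono h.1 (by omega))
  have e2 := T.AB hv'
  have e3 := T.left L h.1
  have l1 := T.len _ h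
  have l2 := T.len _ hv'
  rw [List.length_cons] at l1 l2
  have hD := T.D0 (L.length + 1)
  have i1 := T.K_incr hF.mono h.1 hd1 (hK L h.1) (le_refl _)
    (show A L < A (j :: L) by linarith) ((T.AB h).le.trans (T.le_B h))
  have k1 : (KK m A B F (j :: L)).1 - (KK m A B F L).1 = ((KK m A B F L).2 - (KK m A B F L).1) *
      ((F (A (j :: L)) - F (A L)) / (F (B L) - F (A L))) := by
    simp only [KK]
    rw [pt_mid hj h.2.2]
    ring
  have i2 := hK _ h
  have d1 := hF.dr (x - D (L.length + 1)) (D (L.length + 1)) hD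
  have s1 : x - D (L.length + 1) + 2 * D (L.length + 1) = x + D (L.length + 1) := by ring
  have s2 : x - D (L.length + 1) + D (L.length + 1) = x := by ring
  rw [s1, s2] at d1
  have f1 := hF.mono.monotone (show B (j :: L) ≤ x + D (L.length + 1) by linarith)
  have f2 := hF.mono.monotone (show x - D (L.length + 1) ≤ A (j :: L) by linarith)
  have f3 := hF.mono.monotone (show A L ≤ x - D (L.length + 1) by linarith)
  have f4 := hF.mono.monotone hx1
  have f5 := hF.mono (show A L < A (j :: L) by linarith)
  have f6 := hF.mono (T.AB h)
  have g1 : F (B (j :: L)) - F (A (j :: L)) ≤ H * (F x - F (A L)) := by nlinarith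
  have g2 : (F (B (j :: L)) - F (A (j :: L))) ^ d ≤ H ^ d * (F x - F (A L)) ^ d := by
    rw [← Real.mul_rpow (by linarith) (by linarith)]
    exact Real.rpow_le_rpow (by linarith) g1 hd.le
  have g3 : (F (A (j :: L)) - F (A L)) ^ d ≤ (F x - F (A L)) ^ d :=
    Real.rpow_le_rpow (by linarith) (by linarith) hd.le
  have g4 := mul_le_mul_of_nonneg_left g2 hM
  have g5 := mul_le_mul_of_nonneg_left g3 hM
  linarith

/-- `x` and `y` share the address `L`. -/
structure Good (m : ℕ → ℕ) (A B : List ℕ → ℝ) (F : ℝ → ℝ) (x y : ℝ) (L : ℕ → List ℕ) : Prop where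
  addr : Addr m L
  xA : ∀ k, A (L k) ≤ x
  xB : ∀ k, x ≤ B (L k)
  ylo : ∀ k, (KK m A B F (L k)).1 ≤ y
  yhi : ∀ k, y ≤ (KK m A B F (L k)).2

lemma rightEst (T : HTree m A B D) (hF : QSF F H) (hd : 0 < d) (hd1 : d < 1)
    (hK : KHol m A B F M d) {x y : ℝ} {L : ℕ → List ℕ} (hG : Good m A B F x y L) (k : ℕ) :
    (KK m A B F (L k)).2 - y ≤ M * (1 + H ^ d) * (F (B (L k)) - F x) ^ d := by
  have hM := T.M_nonneg hF hK
  have hH := hF.H1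
  have hxB := hF.mono.monotone (hG.xB k)
  have chain : ∀ i, (∀ i' < i, L (k + i' + 1) = m (k + i') :: L (k + i')) →
      (KK m A B F (L (k + i))).2 = (KK m A B F (L k)).2 ∧ B (L (k + i)) ≤ B (L k) := by
    intro i
    induction i with
    | zero => intro _; simp
    | succ i ih =>
      intro h
      obtain ⟨h1, h2⟩ := ih (fun i' hi' => h i' (by omega))
      have h3 := h i (by omega)
      have hl := hG.addr.length (k + i)
      have hv := hG.addr.valid (k + i + 1)
      constructor
      · have := T.K_hi_last hF.mono (hG.addr.valid (k + i))
        rw [hl] at this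
        rw [← add_assoc, h3, this, h1]
      · rw [h3] at hv
        rw [← add_assoc, h3]
        exact (T.le_B hv).trans h2
  by_cases hall : ∀ i, L (k + i + 1) = m (k + i) :: L (k + i)
  · have hlim := (T.K_tendsto hF hd hK hG.addr).comp (tendsto_add_atTop_nat k)
    have : (KK m A B F (L k)).2 - y ≤ 0 := by
      refine ge_of_tendsto' hlim (fun i => ?_)
      have e1 := (chain i (fun i' _ => hall i')).1
      have e2 := hG.ylo (k + i)
      simp only [Function.comp]
      rw [add_comm i k]
      linarith
    refine this.trans ?_
    have : 0 ≤ F (B (L k)) - F x := by linarith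
    positivity
  · push Not at hall
    classical
    let i := Nat.find hall
    have hi := Nat.find_spec hall
    have hlt : ∀ i' < i, L (k + i' + 1) = m (k + i') :: L (k + i') := fun i' h' => by
      have := Nat.find_min hall h'
      push Not at this
      exact this
    obtain ⟨c1, c2⟩ := chain i hlt
    obtain ⟨j, j1, j2, e⟩ := hG.addr.succ (k + i)
    have hjm : j ≠ m (k + i) := fun h => hi (by rw [h] at e; exact e)
    have hv := hG.addr.valid (k + i + 1)
    have x1 := hG.xA (k + i + 1)
    have x2 := hG.xB (k + i + 1)
    have y1 := hG.ylo (k + i + 1)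
    rw [e] at hv x1 x2 y1
    have := T.rightEst0 hF hd hd1 hK hv (by rw [hG.addr.length]; omega) x1 x2 y1
    rw [c1] at this
    refine this.trans (mul_le_mul_of_nonneg_left ?_ (by positivity))
    have := hF.mono.monotone (hG.xB (k + i))
    have := hF.mono.monotone c2
    exact Real.rpow_le_rpow (by linarith) (by linarith) hd.le

lemma leftEst (T : HTree m A B D) (hF : QSF F H) (hd : 0 < d) (hd1 : d < 1)
    (hK : KHol m A B F M d) {x y : ℝ} {L : ℕ → List ℕ} (hG : Good m A B F x y L) (k : ℕ) :
    y - (KK m A B F (L k)).1 ≤ M * (1 + H ^ d) * (F x - F (A (L k))) ^ d := by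
  have hM := T.M_nonneg hF hK
  have hH := hF.H1
  have hxB := hF.mono.monotone (hG.xA k)
  have chain : ∀ i, (∀ i' < i, L (k + i' + 1) = 1 :: L (k + i')) →
      (KK m A B F (L (k + i))).1 = (KK m A B F (L k)).1 ∧ A (L k) ≤ A (L (k + i)) := by
    intro i
    induction i with
    | zero => intro _; simp
    | succ i ih =>
      intro h
      obtain ⟨h1, h2⟩ := ih (fun i' hi' => h i' (by omega))
      have h3 := h i (by omega)
      have hv := hG.addr.valid (k + i + 1)
      constructor
      · rw [← add_assoc, h3, K_lo_one, h1]
      · rw [h3] at hv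
        rw [← add_assoc, h3]
        exact h2.trans (T.A_le hv)
  by_cases hall : ∀ i, L (k + i + 1) = 1 :: L (k + i)
  · have hlim := (T.K_tendsto hF hd hK hG.addr).comp (tendsto_add_atTop_nat k)
    have : y - (KK m A B F (L k)).1 ≤ 0 := by
      refine ge_of_tendsto' hlim (fun i => ?_)
      have e1 := (chain i (fun i' _ => hall i')).1
      have e2 := hG.yhi (k + i)
      simp only [Function.comp]
      rw [add_comm i k]
      linarith
    refine this.trans ?_
    have : 0 ≤ F x - F (A (L k)) := by linarith
    positivity
  · push Not at hall
    classical
    let i := Nat.find hall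
    have hi := Nat.find_spec hall
    have hlt : ∀ i' < i, L (k + i' + 1) = 1 :: L (k + i') := fun i' h' => by
      have := Nat.find_min hall h'
      push Not at this
      exact this
    obtain ⟨c1, c2⟩ := chain i hlt
    obtain ⟨j, j1, j2, e⟩ := hG.addr.succ (k + i)
    have hjm : j ≠ 1 := fun h => hi (by rw [h] at e; exact e)
    have hv := hG.addr.valid (k + i + 1)
    have x1 := hG.xA (k + i + 1)
    have x2 := hG.xB (k + i + 1)
    have y1 := hG.yhi (k + i + 1)
    rw [e] at hv x1 x2 y1
    have := T.leftEst0 hF hd hd1 hK hv (by omega) x1 x2 y1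
    rw [c1] at this
    refine this.trans (mul_le_mul_of_nonneg_left ?_ (by positivity))
    have := hF.mono.monotone (hG.xA (k + i))
    have := hF.mono.monotone c2
    exact Real.rpow_le_rpow (by linarith) (by linarith) hd.le

lemma sepEst (T : HTree m A B D) (hF : QSF F H) (hd : 0 < d) (hd1 : d < 1)
    (hK : KHol m A B F M d) {x y x' y' : ℝ} {L L' : ℕ → List ℕ} (hG : Good m A B F x y L)
    (hG' : Good m A B F x' y' L') {k j j' : ℕ} (_hk : L k = L' k) (hj : L (k + 1) = j :: L k)
    (hj' : L' (k + 1) = j' :: L k) (hlt : j < j') :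
    |y - y'| ≤ M * (3 + 2 * H ^ d) * |F x - F x'| ^ d := by
  have hM := T.M_nonneg hF hK
  have hH := hF.H1
  have v := hG.addr.valid (k + 1)
  have v' := hG'.addr.valid (k + 1)
  have r := T.rightEst hF hd hd1 hK hG (k + 1)
  have l := T.leftEst hF hd hd1 hK hG' (k + 1)
  have xB := hG.xB (k + 1)
  have xA := hG'.xA (k + 1)
  have yh := hG.yhi (k + 1)
  have yl := hG'.ylo (k + 1)
  rw [hj] at v r xB yh
  rw [hj'] at v' l xA yl
  set N := L k
  have v0 : VL m N := v.1
  have hm1 := v'.2.2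
  have hj1 := v.2.1
  have hY := sub_pos.2 (hF.mono (T.AB v0))
  have ev : VL m ((j + 1) :: N) := ⟨v0, by omega, by omega⟩
  have e1 : B (j :: N) ≤ A ((j + 1) :: N) := T.mid N v0 j v.2.1 (by omega)
  have e2 : A ((j + 1) :: N) ≤ A (j' :: N) := by
    rw [← pt_mid (m := m) (A := A) (B := B) (by omega : 1 < j + 1) ev.2.2,
      ← pt_mid (m := m) (A := A) (B := B) (by omega : 1 < j') hm1]
    exact T.pt_mono v0 hlt
  have k1 : (KK m A B F (j' :: N)).1 - (KK m A B F (j :: N)).2 =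
      ((KK m A B F N).2 - (KK m A B F N).1) *
      ((F (A (j' :: N)) - F (A ((j + 1) :: N))) / (F (B N) - F (A N))) := by
    simp only [KK]
    rw [pt_mid (by omega) hm1, pt_mid (by omega) ev.2.2]
    ring
  have f1 := hF.mono.monotone xB
  have f2 := hF.mono.monotone e1
  have f3 := hF.mono.monotone e2
  have f4 := hF.mono.monotone xA
  have hX : |F x - F x'| = F x' - F x := by
    rw [abs_sub_comm, abs_of_nonneg]; linarith
  have k0 : 0 ≤ (KK m A B F (j' :: N)).1 - (KK m A B F (j :: N)).2 := by
    rw [k1]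
    have := sub_nonneg.2 (T.K_pos hF.mono N v0)
    have : 0 ≤ F (A (j' :: N)) - F (A ((j + 1) :: N)) := by linarith
    positivity
  have k2 : (KK m A B F (j' :: N)).1 - (KK m A B F (j :: N)).2 ≤ M * (F x' - F x) ^ d := by
    rw [k1]
    rcases e2.eq_or_lt with h | h
    · rw [h]
      have : 0 ≤ F x' - F x := by linarith
      simp only [sub_self, zero_div, mul_zero]
      positivity
    · refine (T.K_incr hF.mono v0 hd1 (hK N v0) (T.A_le ev) h
        ((T.AB v').le.trans (T.le_B v'))).trans ?_
      exact mul_le_mul_of_nonneg_left (Real.rpow_le_rpow (by linarith) (by linarith) hd.le) hM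
  have hyy : |y - y'| = y' - y := by
    rw [abs_sub_comm, abs_of_nonneg]; linarith
  rw [hyy, hX]
  have r' : (KK m A B F (j :: N)).2 - y ≤ M * (1 + H ^ d) * (F x' - F x) ^ d :=
    r.trans (mul_le_mul_of_nonneg_left (Real.rpow_le_rpow (by linarith) (by linarith) hd.le)
      (by positivity))
  have l' : y' - (KK m A B F (j' :: N)).1 ≤ M * (1 + H ^ d) * (F x' - F x) ^ d :=
    l.trans (mul_le_mul_of_nonneg_left (Real.rpow_le_rpow (by linarith) (by linarith) hd.le)
      (by positivity))
  have : M * (3 + 2 * H ^ d) * (F x' - F x) ^ d = M * (1 + H ^ d) * (F x' - F x) ^ d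
    + M * (F x' - F x) ^ d + M * (1 + H ^ d) * (F x' - F x) ^ d := by ring
  linarith

lemma mainEst (T : HTree m A B D) (hF : QSF F H) (hd : 0 < d) (hd1 : d < 1)
    (hK : KHol m A B F M d) {x y x' y' : ℝ} {L L' : ℕ → List ℕ} (hG : Good m A B F x y L)
    (hG' : Good m A B F x' y' L') :
    |y - y'| ≤ M * (3 + 2 * H ^ d) * |F x - F x'| ^ d := by
  have hM := T.M_nonneg hF hK
  have hH := hF.H1
  by_cases hall : ∀ k, L k = L' k
  · have : |y - y'| ≤ 0 := by
      refine ge_of_tendsto' (T.K_tendsto hF hd hK hG.addr) (fun k => ?_)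
      have a1 := hG.ylo k
      have a2 := hG.yhi k
      have a3 := hG'.ylo k
      have a4 := hG'.yhi k
      rw [← hall] at a3 a4
      rw [abs_le]; constructor <;> linarith
    exact this.trans (by positivity)
  · push Not at hall
    classical
    have hs := Nat.find_spec hall
    have hmin := fun i (h : i < Nat.find hall) => Nat.find_min hall h
    obtain ⟨k, hk⟩ : ∃ k, Nat.find hall = k + 1 := by
      refine Nat.exists_eq_succ_of_ne_zero (fun h0 => hs ?_)
      rw [h0, hG.addr.zero, hG'.addr.zero]
    have hk' := hmin k (by omega)
    push Not at hk'
    rw [hk] at hs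
    obtain ⟨j, _, _, e⟩ := hG.addr.succ k
    obtain ⟨j', _, _, e'⟩ := hG'.addr.succ k
    have hne : j ≠ j' := fun h => hs (by rw [e, e', hk', h])
    rcases lt_or_gt_of_ne hne with h | h
    · exact T.sepEst hF hd hd1 hK hG hG' hk' e (by rw [hk', e']) h
    · rw [abs_sub_comm y, abs_sub_comm (F x)]
      exact T.sepEst hF hd hd1 hK hG' hG hk'.symm e' (by rw [← hk', e]) h

end HTree

namespace HTree

variable {m : ℕ → ℕ} {A B : List ℕ → ℝ} {D : ℕ → ℝ} {F : ℝ → ℝ} {H M d : ℝ}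

lemma step (T : HTree m A B D) (hF : StrictMono F) {L : List ℕ} (h : VL m L) {y : ℝ}
    (h1 : (KK m A B F L).1 ≤ y) (h2 : y ≤ (KK m A B F L).2) :
    ∃ j, VL m (j :: L) ∧ (KK m A B F (j :: L)).1 ≤ y ∧ y ≤ (KK m A B F (j :: L)).2 := by
  classical
  have hm := T.hm L.length
  set j := Nat.findGreatest (fun j => (KK m A B F (j :: L)).1 ≤ y) (m L.length) with hj
  have h0 : (fun j => (KK m A B F (j :: L)).1 ≤ y) 1 := by
    simp only []
    rw [K_lo_one]; exact h1
  have j1 : 1 ≤ j := Nat.le_findGreatest (by omega) h0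
  have j2 : j ≤ m L.length := Nat.findGreatest_le _
  have j3 : (KK m A B F (j :: L)).1 ≤ y :=
    Nat.findGreatest_spec (P := fun j => (KK m A B F (j :: L)).1 ≤ y) (show 1 ≤ m L.length by omega) h0
  refine ⟨j, ⟨h, j1, j2⟩, j3, ?_⟩
  rcases j2.eq_or_lt with e | e
  · rw [e, T.K_hi_last hF h]; exact h2
  · have := Nat.findGreatest_is_greatest (P := fun j => (KK m A B F (j :: L)).1 ≤ y)
      (n := m L.length) (k := j + 1) (by omega) e
    simp only [not_le] at this
    have e2 : (KK m A B F ((j + 1) :: L)).1 = (KK m A B F (j :: L)).2 := by simp only [KK]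
    rw [e2] at this
    exact this.le

lemma exists_good (T : HTree m A B D) (hF : StrictMono F) {y : ℝ} (h0 : 0 ≤ y) (h1 : y ≤ 1) :
    ∃ x L, Good m A B F x y L := by
  let St := {L : List ℕ // VL m L ∧ (KK m A B F L).1 ≤ y ∧ y ≤ (KK m A B F L).2}
  have hstep : ∀ s : St, ∃ s' : St, ∃ j, s'.1 = j :: s.1 := fun s => by
    obtain ⟨j, a, b⟩ := T.step hF s.2.1 s.2.2.1 s.2.2.2
    exact ⟨⟨j :: s.1, a, b⟩, j, rfl⟩
  choose nx hnx using hstep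
  let s0 : St := ⟨[], trivial, by simpa [KK] using h0, by simpa [KK] using h1⟩
  let s : ℕ → St := fun k => Nat.rec s0 (fun _ t => nx t) k
  have hs : ∀ k, s (k + 1) = nx (s k) := fun k => rfl
  have hlen : ∀ k, (s k).1.length = k := by
    intro k
    induction k with
    | zero => rfl
    | succ k ih =>
      obtain ⟨j, hj⟩ := hnx (s k)
      rw [hs, hj, List.length_cons, ih]
  have haddr : Addr m (fun k => (s k).1) := by
    refine ⟨rfl, fun k => ?_⟩
    obtain ⟨j, hj⟩ := hnx (s k)
    have hv := (s (k + 1)).2.1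
    rw [hs, hj] at hv
    refine ⟨j, hv.2.1, ?_, ?_⟩
    · have := hv.2.2
      rwa [hlen] at this
    · simp only [hs, hj]
  have hA : Monotone (fun k => A (s k).1) := monotone_nat_of_le_succ (fun k => by
    obtain ⟨j, hj⟩ := hnx (s k)
    have hv := (s (k + 1)).2.1
    rw [hs, hj] at hv
    rw [hs, hj]
    exact T.A_le hv)
  have hB : Antitone (fun k => B (s k).1) := antitone_nat_of_succ_le (fun k => by
    obtain ⟨j, hj⟩ := hnx (s k)
    have hv := (s (k + 1)).2.1
    rw [hs, hj] at hv
    rw [hs, hj]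
    exact T.le_B hv)
  have hmem := hA.ciSup_mem_iInter_Icc_of_antitone hB (fun k => (T.AB (s k).2.1).le)
  rw [Set.mem_iInter] at hmem
  exact ⟨_, _, haddr, fun k => (hmem k).1, fun k => (hmem k).2, fun k => (s k).2.2.1,
    fun k => (s k).2.2.2⟩

end HTree

lemma dimH_of_inverse_holder {φ : ℝ → ℝ} {M d : ℝ} (hM : 0 ≤ M) (hd : 0 < d)
    (h : ∀ y ∈ Icc (0 : ℝ) 1, ∀ y' ∈ Icc (0 : ℝ) 1, |y - y'| ≤ M * |φ y - φ y'| ^ d) :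
    ENNReal.ofReal d ≤ dimH (φ '' Icc 0 1) := by
  have hinj : InjOn φ (Icc 0 1) := by
    intro y hy y' hy' e
    have := h y hy y' hy'
    rw [e, sub_self, abs_zero, Real.zero_rpow hd.ne', mul_zero] at this
    exact sub_eq_zero.1 (abs_eq_zero.1 (le_antisymm this (abs_nonneg _)))
  set g := Function.invFunOn φ (Icc (0 : ℝ) 1)
  have hg : ∀ y ∈ Icc (0 : ℝ) 1, g (φ y) = y := fun y hy => hinj.leftInvOn_invFunOn hy
  have hH : HolderOnWith M.toNNReal d.toNNReal g (φ '' Icc 0 1) := by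
    rintro _ ⟨y, hy, rfl⟩ _ ⟨y', hy', rfl⟩
    rw [hg y hy, hg y' hy', edist_dist, edist_dist, Real.dist_eq, Real.dist_eq,
      Real.coe_toNNReal d hd.le, ENNReal.ofReal_rpow_of_nonneg (abs_nonneg _) hd.le]
    change _ ≤ ENNReal.ofReal M * _
    rw [← ENNReal.ofReal_mul hM]
    exact ENNReal.ofReal_le_ofReal (h y hy y' hy')
  have h1 := hH.dimH_image_le (Real.toNNReal_pos.2 hd)
  have h2 : g '' (φ '' Icc 0 1) = Icc 0 1 := by
    rw [image_image]
    ext z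
    constructor
    · rintro ⟨y, hy, rfl⟩
      show g (φ y) ∈ _
      rw [hg y hy]; exact hy
    · intro hz
      exact ⟨z, hz, hg z hz⟩
  have h3 : dimH (Icc (0 : ℝ) 1) = 1 := by
    have := Real.dimH_of_nonempty_interior (s := Icc (0 : ℝ) 1) (by
      rw [interior_Icc]; exact nonempty_Ioo.2 (by norm_num))
    simpa using this
  rw [h2, h3] at h1
  have hd0 : ENNReal.ofReal d ≠ 0 := by simpa using hd
  have h4 : 1 ≤ dimH (φ '' Icc 0 1) / ENNReal.ofReal d := h1
  rw [ENNReal.le_div_iff_mul_le (Or.inl hd0) (Or.inl ENNReal.ofReal_ne_top), one_mul] at h4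
  exact h4

theorem HTree.dim_ge {m : ℕ → ℕ} {A B : List ℕ → ℝ} {D : ℕ → ℝ} {F : ℝ → ℝ} {H M d : ℝ}
    (T : HTree m A B D) (hF : QSF F H) (hd : 0 < d) (hd1 : d < 1)
    (hK : HTree.KHol m A B F M d) (E : Set ℝ)
    (hE : ∀ x L, Addr m L → (∀ k, A (L k) ≤ x ∧ x ≤ B (L k)) → x ∈ E) :
    ENNReal.ofReal d ≤ dimH (F '' E) := by
  have hM := T.M_nonneg hF hK
  have hH := hF.H1
  have hex : ∀ y : ℝ, ∃ x, y ∈ Icc (0 : ℝ) 1 → ∃ L, HTree.Good m A B F x y L := by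
    intro y
    by_cases hy : y ∈ Icc (0 : ℝ) 1
    · obtain ⟨x, L, h⟩ := T.exists_good hF.mono hy.1 hy.2
      exact ⟨x, fun _ => ⟨L, h⟩⟩
    · exact ⟨0, fun h => absurd h hy⟩
  choose xx hxx using hex
  have h1 := dimH_of_inverse_holder (φ := fun y => F (xx y)) (M := M * (3 + 2 * H ^ d)) (d := d)
    (by positivity) hd (fun y hy y' hy' => by
      obtain ⟨L, hL⟩ := hxx y hy
      obtain ⟨L', hL'⟩ := hxx y' hy'
      exact T.mainEst hF hd hd1 hK hL hL')
  refine h1.trans (dimH_mono ?_)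
  rintro _ ⟨y, hy, rfl⟩
  obtain ⟨L, hL⟩ := hxx y hy
  exact ⟨xx y, hE _ L hL.addr (fun k => ⟨hL.xA k, hL.xB k⟩), rfl⟩

namespace HTree

variable {m : ℕ → ℕ} {A B : List ℕ → ℝ} {D : ℕ → ℝ} {F : ℝ → ℝ} {H : ℝ}

lemma exists_valid (T : HTree m A B D) (k : ℕ) : ∃ L, VL m L ∧ L.length = k := by
  induction k with
  | zero => exact ⟨[], trivial, rfl⟩
  | succ k ih =>
    obtain ⟨L, h, e⟩ := ih
    have := T.hm L.length
    exact ⟨1 :: L, ⟨h, le_refl _, by omega⟩, by simp [e]⟩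

lemma mD' (T : HTree m A B D) (k : ℕ) : m k * D (k + 1) ≤ D k := by
  obtain ⟨L, h, e⟩ := T.exists_valid k
  have := T.mD h
  rwa [e] at this

/-- reciprocal of the density of level `k+1` in level `k` -/
noncomputable def uu (m : ℕ → ℕ) (D : ℕ → ℝ) (k : ℕ) : ℝ := D k / (m k * D (k + 1))

lemma m0 (T : HTree m A B D) (k : ℕ) : (2 : ℝ) ≤ m k := by exact_mod_cast T.hm k

lemma one_le_uu (T : HTree m A B D) (k : ℕ) : 1 ≤ uu m D k := by
  have h1 := T.m0 k
  have h2 := T.D0 (k + 1)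
  rw [uu, le_div_iff₀ (by positivity), one_mul]
  exact T.mD' k

lemma prod_uu (T : HTree m A B D) (k : ℕ) :
    ∏ i ∈ Finset.range k, uu m D i = D 0 / ((∏ i ∈ Finset.range k, (m i : ℝ)) * D k) := by
  induction k with
  | zero => simp [div_self (T.D0 0).ne']
  | succ k ih =>
    rw [Finset.prod_range_succ, Finset.prod_range_succ, ih, uu]
    have h1 := T.m0 k
    have h2 := T.D0 (k + 1)
    have h3 := T.D0 k
    have h4 : 0 < ∏ i ∈ Finset.range k, (m i : ℝ) :=
      Finset.prod_pos (fun i _ => by have := T.m0 i; linarith)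
    field_simp

lemma exists_KHol (T : HTree m A B D) (hF : QSF F H) {C : ℝ} (hC : 1 ≤ C)
    (hD1 : D 0 ≤ 1)
    (hg1 : ∀ L j, VL m (j :: L) → A (j :: L) - cellPt m A B L j ≤
      2 * C * (uu m D L.length - 1) * D (L.length + 1))
    (hg2 : ∀ L j, VL m (j :: L) → cellPt m A B L (j + 1) - B (j :: L) ≤
      2 * C * (uu m D L.length - 1) * D (L.length + 1))
    (hN : ∀ s : ℝ, 0 < s → s < 1 → ∀ᶠ k in atTop,
      1 ≤ (∏ i ∈ Finset.range k, (m i : ℝ)) * D k ^ s)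
    {d : ℝ} (hd : 0 < d) (hd1 : d < 1) : ∃ M, KHol m A B F M d := by
  obtain ⟨q, hq, hdec⟩ := hF.decay
  set γ := q * (1 - d) / 2 with hγ
  have hγ0 : 0 < γ := by
    have : 0 < 1 - d := by linarith
    positivity
  obtain ⟨a, ha, hgap⟩ := hF.gap hC hγ0
  set X0 := F (B []) - F (A []) with hX0
  have hX0p : 0 < X0 := sub_pos.2 (hF.mono (T.AB trivial))
  set P : ℕ → ℝ := fun k => X0 ^ (-d) *
    ∏ i ∈ Finset.range k, ((2 : ℝ) ^ γ * uu m D i ^ a * (m i : ℝ) ^ (-(2 * γ))) with hP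
  have hPpos : ∀ k, 0 < P k := fun k => by
    refine mul_pos (Real.rpow_pos_of_pos hX0p _) (Finset.prod_pos (fun i _ => ?_))
    have := T.one_le_uu i
    have := T.m0 i
    positivity
  have key : ∀ L, VL m L → (KK m A B F L).2 - (KK m A B F L).1 ≤
      P L.length * (F (B L) - F (A L)) ^ d := by
    intro L
    induction L with
    | nil =>
      intro _
      simp only [KK, hP, List.length_nil, Finset.range_zero, Finset.prod_empty, mul_one]
      rw [← hX0, ← Real.rpow_add hX0p]
      simp
    | cons j L ih =>
      intro h
      have ih := ih h.1
      obtain ⟨gR, gL⟩ := hgap _ (T.one_le_uu L.length)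
      have hl := T.len _ h
      have hl0 := T.len _ h.1
      rw [List.length_cons] at hl
      have hAB := T.AB h
      have e1 := gR (A (j :: L)) (B (j :: L)) (cellPt m A B L (j + 1)) hAB
        (T.le_pt h.1 h.2.1 h.2.2) (by rw [hl]; exact hg2 L j h)
      have e2 := gL (cellPt m A B L j) (A (j :: L)) (B (j :: L))
        (T.pt_le h.1 h.2.1 h.2.2) hAB (by rw [hl]; exact hg1 L j h)
      set τ := (2 : ℝ) ^ γ * uu m D L.length ^ a with hτ
      have hu := T.one_le_uu L.length
      have hm2 := T.m0 L.length
      have hτ0 : 0 < τ := by positivity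
      set x := F (B (j :: L)) - F (A (j :: L)) with hx
      set Y := F (B L) - F (A L) with hY
      have hxp : 0 < x := sub_pos.2 (hF.mono hAB)
      have hYp : 0 < Y := sub_pos.2 (hF.mono (T.AB h.1))
      have e3 : F (cellPt m A B L (j + 1)) - F (cellPt m A B L j) ≤ τ * x := by linarith
      have e4 : x ≤ (m L.length : ℝ) ^ (-q) * Y :=
        hdec _ (T.hm _) _ _ _ _ (T.A_le h) hAB (T.le_B h) (by
          rw [hl, hl0]; exact T.mD' _)
      have e5 : (KK m A B F (j :: L)).2 - (KK m A B F (j :: L)).1 =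
          ((KK m A B F L).2 - (KK m A B F L).1) *
          ((F (cellPt m A B L (j + 1)) - F (cellPt m A B L j)) / Y) := by
        simp only [KK]; ring
      have hK0 := sub_nonneg.2 (T.K_pos hF.mono L h.1)
      have hPk := hPpos L.length
      have e6 : (x / Y) ^ (1 - d) ≤ (m L.length : ℝ) ^ (-(2 * γ)) := by
        have : x / Y ≤ (m L.length : ℝ) ^ (-q) := by rwa [div_le_iff₀ hYp]
        calc (x / Y) ^ (1 - d) ≤ ((m L.length : ℝ) ^ (-q)) ^ (1 - d) :=
              Real.rpow_le_rpow (by positivity) this (by linarith)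
          _ = _ := by
              rw [← Real.rpow_mul (by linarith)]
              congr 1
              rw [hγ]; ring
      have e7 : x / Y * Y ^ d = x ^ d * (x / Y) ^ (1 - d) := by
        rw [Real.div_rpow hxp.le hYp.le, Real.rpow_sub hxp, Real.rpow_sub hYp, Real.rpow_one,
          Real.rpow_one]
        have := Real.rpow_pos_of_pos hxp d
        have := Real.rpow_pos_of_pos hYp d
        field_simp
      have hPs : P (j :: L).length = P L.length * (τ * (m L.length : ℝ) ^ (-(2 * γ))) := by
        simp only [hP, List.length_cons, Finset.prod_range_succ, hτ]
        ring
      rw [e5, hPs]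
      calc _ ≤ (P L.length * Y ^ d) * (τ * x / Y) := by
            apply mul_le_mul ih _ _ (by positivity)
            · exact div_le_div_of_nonneg_right e3 hYp.le
            · apply div_nonneg _ hYp.le
              exact sub_nonneg.2 (hF.mono.monotone (T.pt_mono h.1 (Nat.le_succ j)))
        _ = P L.length * τ * (x / Y * Y ^ d) := by ring
        _ = P L.length * τ * (x ^ d * (x / Y) ^ (1 - d)) := by rw [e7]
        _ ≤ P L.length * τ * (x ^ d * (m L.length : ℝ) ^ (-(2 * γ))) := by gcongr
        _ = _ := by ring
  -- boundedness of `P`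
  have hN1 : ∀ k, 1 ≤ ∏ i ∈ Finset.range k, (m i : ℝ) := fun k => by
    induction k with
    | zero => simp
    | succ k ih =>
      rw [Finset.prod_range_succ]
      have := T.m0 k
      nlinarith
  have hPle : ∀ k, P k ≤ X0 ^ (-d) * ((∏ i ∈ Finset.range k, (m i : ℝ)) ^ (-γ) *
      (D 0 / ((∏ i ∈ Finset.range k, (m i : ℝ)) * D k)) ^ a) := by
    intro k
    apply mul_le_mul_of_nonneg_left _ (Real.rpow_pos_of_pos hX0p _).le
    rw [← T.prod_uu, ← Real.finsetProd_rpow _ _ (fun i _ => by have := T.m0 i; linarith),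
      ← Real.finsetProd_rpow _ _ (fun i _ => by have := T.one_le_uu i; linarith),
      ← Finset.prod_mul_distrib]
    apply Finset.prod_le_prod
    · intro i _
      have := T.one_le_uu i
      have := T.m0 i
      positivity
    · intro i _
      have h1 := T.one_le_uu i
      have h2 := T.m0 i
      have h3 : (2 : ℝ) ^ γ ≤ (m i : ℝ) ^ γ := Real.rpow_le_rpow (by norm_num) h2 hγ0.le
      have h4 : (m i : ℝ) ^ γ * (m i : ℝ) ^ (-(2 * γ)) = (m i : ℝ) ^ (-γ) := by
        rw [← Real.rpow_add (by linarith)]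
        congr 1; ring
      rw [← h4]
      have h5 : 0 ≤ uu m D i ^ a := by positivity
      have h6 : 0 ≤ (m i : ℝ) ^ (-(2 * γ)) := by positivity
      calc _ = (2 : ℝ) ^ γ * ((m i : ℝ) ^ (-(2 * γ)) * uu m D i ^ a) := by ring
        _ ≤ (m i : ℝ) ^ γ * ((m i : ℝ) ^ (-(2 * γ)) * uu m D i ^ a) :=
          mul_le_mul_of_nonneg_right h3 (by positivity)
        _ = _ := by ring
  set s := (a + 1) / (a + 1 + γ) with hs
  have hs0 : 0 < s := by positivity
  have hs1 : s < 1 := by rw [hs, div_lt_one (by positivity)]; linarith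
  have hev : ∀ᶠ k in atTop, P k ≤ X0 ^ (-d) := by
    filter_upwards [hN s hs0 hs1] with k hk
    refine (hPle k).trans (mul_le_of_le_one_right (Real.rpow_pos_of_pos hX0p _).le ?_)
    set N := ∏ i ∈ Finset.range k, (m i : ℝ) with hNdef
    have hN1k := hN1 k
    rw [← hNdef] at hN1k
    have hDk := T.D0 k
    have h0 := T.D0 0
    have hDN : N ^ (-(1 / s)) ≤ D k := by
      have h1 : N ^ (-1 : ℝ) ≤ D k ^ s := by
        rw [Real.rpow_neg_one, inv_le_iff_one_le_mul₀ (by linarith)]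
        linarith
      have h2 := Real.rpow_le_rpow (by positivity) h1 (show 0 ≤ 1 / s by positivity)
      rw [← Real.rpow_mul (by linarith), ← Real.rpow_mul hDk.le, mul_one_div_cancel hs0.ne',
        Real.rpow_one] at h2
      convert h2 using 2
      ring
    have h3 : D 0 / (N * D k) ≤ N ^ (γ / (a + 1)) := by
      rw [div_le_iff₀ (by positivity)]
      calc D 0 ≤ 1 := hD1
        _ = N ^ (γ / (a + 1)) * (N * N ^ (-(1 / s))) := by
            nth_rewrite 2 [← Real.rpow_one N]
            rw [← Real.rpow_add (by linarith), ← Real.rpow_add (by linarith)]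
            rw [show γ / (a + 1) + (1 + -(1 / s)) = 0 by rw [hs]; field_simp; ring, Real.rpow_zero]
        _ ≤ _ := by gcongr
    calc N ^ (-γ) * (D 0 / (N * D k)) ^ a ≤ N ^ (-γ) * (N ^ (γ / (a + 1))) ^ a := by
          gcongr
      _ = N ^ (-γ + γ / (a + 1) * a) := by
          rw [← Real.rpow_mul (by linarith), ← Real.rpow_add (by linarith)]
      _ ≤ 1 := by
          apply Real.rpow_le_one_of_one_le_of_nonpos hN1k
          have : γ / (a + 1) * a ≤ γ := by
            rw [div_mul_eq_mul_div, div_le_iff₀ (by positivity)]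
            nlinarith
          linarith
  have hbdd : BddAbove (range P) :=
    Filter.IsBoundedUnder.bddAbove_range ⟨X0 ^ (-d), by simpa using hev⟩
  obtain ⟨M, hM⟩ := hbdd
  refine ⟨M, fun L h => (key L h).trans (mul_le_mul_of_nonneg_right (hM ⟨_, rfl⟩) ?_)⟩
  exact Real.rpow_nonneg (sub_pos.2 (hF.mono (T.AB h))).le _

end HTree

lemma validWord_nil (n : ℕ → ℕ) : ValidWord n [] := fun j h => absurd h (by simp)

lemma validWord_snoc {n : ℕ → ℕ} {σ : List ℕ} {i : ℕ} : ValidWord n (σ ++ [i]) ↔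
    ValidWord n σ ∧ 1 ≤ i ∧ i ≤ n (σ.length + 1) := by
  constructor
  · intro h
    refine ⟨fun j hj => ?_, ?_⟩
    · have := h j (by rw [List.length_append]; simp; omega)
      simpa [List.getElem_append_left hj] using this
    · have := h σ.length (by simp)
      simpa using this
  · rintro ⟨h, h1, h2⟩ j hj
    rw [List.length_append, List.length_singleton] at hj
    rcases Nat.lt_or_ge j σ.length with h3 | h3
    · have := h j h3
      simpa [List.getElem_append_left h3] using this
    · have : j = σ.length := by omega
      subst this
      simpa using ⟨h1, h2⟩

lemma VL_iff {n : ℕ → ℕ} (L : List ℕ) :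
    VL (fun k => n (k + 1)) L ↔ ValidWord n L.reverse := by
  induction L with
  | nil => simp [VL, validWord_nil]
  | cons j L ih =>
    rw [List.reverse_cons, validWord_snoc, ← ih, List.length_reverse]
    rfl

namespace HomogeneousPerfectStructure

variable {n : ℕ → ℕ} {c : ℕ → ℝ} {η : ℕ → ℕ → ℝ}

/-- stripped left endpoint -/
def sA (S : HomogeneousPerfectStructure n c η) (L : List ℕ) : ℝ := S.a (L.reverse ++ [1])

/-- stripped right endpoint -/
def sB (S : HomogeneousPerfectStructure n c η) (L : List ℕ) : ℝ :=
  S.b (L.reverse ++ [n (L.length + 1)])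

/-- length of the basic intervals -/
noncomputable def dl (c : ℕ → ℝ) (k : ℕ) : ℝ := ∏ i ∈ Finset.range k, c (i + 1)

/-- length of the stripped intervals -/
noncomputable def sD (n : ℕ → ℕ) (c : ℕ → ℝ) (η : ℕ → ℕ → ℝ) (k : ℕ) : ℝ :=
  dl c k - η (k + 1) 0 - η (k + 1) (n (k + 1))

variable (S : HomogeneousPerfectStructure n c η)

lemma dl_pos (S : HomogeneousPerfectStructure n c η) (k : ℕ) : 0 < dl c k := Finset.prod_pos (fun i _ => (S.hc _ (by omega)).1)

lemma lenW (L : List ℕ) (h : VL (fun k => n (k + 1)) L) :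
    S.b L.reverse - S.a L.reverse = dl c L.length := by
  induction L with
  | nil => simp [S.root_a, S.root_b, dl]
  | cons j L ih =>
    have h1 := (VL_iff L).1 h.1
    have := S.len_eq L.reverse h1 j h.2.1 (by rw [List.length_reverse]; exact h.2.2)
    rw [List.reverse_cons, this, ih h.1, dl, dl, List.length_cons, Finset.prod_range_succ,
      List.length_reverse, mul_comm]

lemma word_ab {σ : List ℕ} (h : ValidWord n σ) : S.a σ < S.b σ := by
  have h1 := S.lenW σ.reverse ((VL_iff _).2 (by simpa using h))
  have := S.dl_pos σ.reverse.length
  rw [List.reverse_reverse] at h1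
  linarith

lemma word_mono {σ : List ℕ} (h : ValidWord n σ) {i j : ℕ} (hi : 1 ≤ i) (hij : i ≤ j)
    (hj : j ≤ n (σ.length + 1)) :
    S.a (σ ++ [i]) ≤ S.a (σ ++ [j]) ∧ S.b (σ ++ [i]) ≤ S.b (σ ++ [j]) := by
  induction j, hij using Nat.le_induction with
  | base => exact ⟨le_refl _, le_refl _⟩
  | succ j hij ih =>
    obtain ⟨h1, h2⟩ := ih (by omega)
    have h3 := S.ordered σ h j (by omega) hj
    have h4 := S.word_ab (validWord_snoc.2 ⟨h, by omega, (by omega : j ≤ _)⟩)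
    have h5 := S.word_ab (validWord_snoc.2 ⟨h, by omega, hj⟩)
    constructor <;> linarith

lemma htree : HTree (fun k => n (k + 1)) S.sA S.sB (sD n c η) := by
  have hlen : ∀ L, VL (fun k => n (k + 1)) L → S.sB L - S.sA L = sD n c η L.length := by
    intro L h
    have h1 := (VL_iff L).1 h
    have e1 := S.gap_left _ h1
    have e2 := S.gap_right _ h1
    have e3 := S.lenW L h
    rw [List.length_reverse] at e1 e2
    simp only [sA, sB, sD]
    linarith
  have hpos : ∀ L, VL (fun k => n (k + 1)) L → S.sA L < S.sB L := by
    intro L h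
    have h1 := (VL_iff L).1 h
    have hn := S.hn (L.length + 1) (by omega)
    have e1 := S.word_ab (validWord_snoc.2 ⟨h1, le_refl 1, by rw [List.length_reverse]; omega⟩)
    have e2 := (S.word_mono h1 (le_refl 1) (show 1 ≤ n (L.length + 1) by omega)
      (by rw [List.length_reverse])).2
    simp only [sA, sB]
    linarith
  have hv : ∀ k, VL (fun k => n (k + 1)) (List.replicate k 1) := by
    intro k
    induction k with
    | zero => trivial
    | succ k ih =>
      rw [List.replicate_succ]
      exact ⟨ih, le_refl _, le_trans (by norm_num) (S.hn _ (by omega))⟩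
  refine ⟨fun k => S.hn _ (by omega), fun k => ?_, hlen, fun L h => ?_, fun L h => ?_,
    fun L h j h1 h2 => ?_⟩
  · have e1 := hlen _ (hv k)
    have e2 := hpos _ (hv k)
    rw [List.length_replicate] at e1
    linarith
  · have hn := S.hn (L.length + 1) (by omega)
    have hw : VL (fun k => n (k + 1)) (1 :: L) := ⟨h, le_refl _, show 1 ≤ n (L.length + 1) by omega⟩
    have := S.sub_left _ ((VL_iff _).1 hw) 1 (le_refl _)
      (le_trans (by norm_num) (S.hn _ (by omega)))
    simpa [sA] using this
  · have hn := S.hn (L.length + 1) (by omega)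
    have hw : VL (fun k => n (k + 1)) (n (L.length + 1) :: L) := ⟨h, by omega, le_refl _⟩
    have := S.sub_right _ ((VL_iff _).1 hw) (n (L.length + 2))
      (le_trans (by norm_num) (S.hn _ (by omega))) (by simp)
    simpa [sB] using this
  · have hw : VL (fun k => n (k + 1)) (j :: L) := ⟨h, h1, by simp only at h2 ⊢; omega⟩
    have hw' : VL (fun k => n (k + 1)) ((j + 1) :: L) := ⟨h, by omega, h2⟩
    have e1 := S.sub_right _ ((VL_iff _).1 hw) (n (L.length + 2))
      (le_trans (by norm_num) (S.hn _ (by omega))) (by simp)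
    have e2 := S.sub_left _ ((VL_iff _).1 hw') 1 (le_refl _)
      (le_trans (by norm_num) (S.hn _ (by omega)))
    have e3 := S.ordered _ ((VL_iff _).1 h) j h1 (by rw [List.length_reverse]; exact h2)
    simp only [sA, sB, List.reverse_cons, List.length_cons]
    simp only [List.reverse_cons] at e1 e2
    exact e1.trans (e3.trans e2)

lemma sD_zero_le (S : HomogeneousPerfectStructure n c η) : sD n c η 0 ≤ 1 := by
  have h1 := S.hη 1 0 (le_refl _) (by omega)
  have h2 := S.hη 1 (n 1) (le_refl _) (le_refl _)
  simp only [sD, dl, Finset.range_zero, Finset.prod_empty, zero_add]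
  linarith

lemma mem_E (x : ℝ) (L : ℕ → List ℕ) (hL : Addr (fun k => n (k + 1)) L)
    (h : ∀ k, S.sA (L k) ≤ x ∧ x ≤ S.sB (L k)) : x ∈ S.E := by
  refine mem_iInter.2 (fun k => ?_)
  have hv := (VL_iff _).1 (hL.valid k)
  have hn := S.hn ((L k).length + 1) (by omega)
  refine mem_iUnion₂.2 ⟨(L k).reverse, ⟨hv, by rw [List.length_reverse, hL.length]⟩, ?_, ?_⟩
  · exact (S.sub_left _ hv 1 (le_refl _) (by rw [List.length_reverse]; omega)).trans (h k).1
  · exact (h k).2.trans (S.sub_right _ hv _ (by omega) (by rw [List.length_reverse]))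

lemma eta_bounds (S : HomogeneousPerfectStructure n c η) {k l : ℕ} (hk : 1 ≤ k) (h1 : 1 ≤ l) (h2 : l ≤ n k - 1) :
    etaMin n η k ≤ η k l ∧ η k l ≤ etaMax n η k ∧ 0 ≤ etaMin n η k := by
  have hfin : (η k '' {l | 1 ≤ l ∧ l ≤ n k - 1}).Finite :=
    ((Set.finite_Icc 1 (n k - 1)).subset (fun l hl => hl)).image _
  refine ⟨csInf_le hfin.bddBelow ⟨l, ⟨h1, h2⟩, rfl⟩, le_csSup hfin.bddAbove ⟨l, ⟨h1, h2⟩, rfl⟩, ?_⟩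
  apply Real.sInf_nonneg
  rintro _ ⟨l, hl, rfl⟩
  exact S.hη k l hk (by have := hl.2; omega)

lemma gaps {C : ℝ} (hC : 1 ≤ C) (hgap : ∀ k, 1 ≤ k → etaMax n η k ≤ C * etaMin n η k)
    (L : List ℕ) (j : ℕ) (h : VL (fun k => n (k + 1)) (j :: L)) :
    S.sA (j :: L) - cellPt (fun k => n (k + 1)) S.sA S.sB L j ≤
      2 * C * (HTree.uu (fun k => n (k + 1)) (sD n c η) L.length - 1) * sD n c η (L.length + 1) ∧
    cellPt (fun k => n (k + 1)) S.sA S.sB L (j + 1) - S.sB (j :: L) ≤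
      2 * C * (HTree.uu (fun k => n (k + 1)) (sD n c η) L.length - 1) * sD n c η (L.length + 1) := by
  have T := S.htree
  set k := L.length with hk
  set e0 := η (k + 2) 0
  set e1 := η (k + 2) (n (k + 2))
  have he0 : 0 ≤ e0 := S.hη _ _ (by omega) (by omega)
  have he1 : 0 ≤ e1 := S.hη _ _ (by omega) (by omega)
  have hn := S.hn (k + 1) (by omega)
  set w := etaMin n η (k + 1) + e0 + e1 with hw
  have hmin := (S.eta_bounds (k := k + 1) (l := 1) (by omega) (by omega) (by omega)).2.2
  have hw0 : 0 ≤ w := by positivity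
  -- basic facts on children
  have cA : ∀ i, VL (fun k => n (k + 1)) (i :: L) → S.sA (i :: L) = S.a (L.reverse ++ [i]) + e0 := by
    intro i hi
    have := S.gap_left _ ((VL_iff _).1 hi)
    simp only [sA]
    rw [List.length_reverse, List.length_cons] at this
    rw [List.reverse_cons] at *
    linarith
  have cB : ∀ i, VL (fun k => n (k + 1)) (i :: L) → S.sB (i :: L) = S.b (L.reverse ++ [i]) - e1 := by
    intro i hi
    have := S.gap_right _ ((VL_iff _).1 hi)
    simp only [sB]
    rw [List.length_reverse, List.length_cons] at this
    rw [List.reverse_cons] at *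
    rw [List.length_cons]
    linarith
  have gm : ∀ i, 1 ≤ i → i + 1 ≤ n (k + 1) →
      S.sA ((i + 1) :: L) - S.sB (i :: L) = η (k + 1) i + e0 + e1 := by
    intro i h1 h2
    have := S.gap_mid _ ((VL_iff _).1 h.1) i h1 (by rw [List.length_reverse, ← hk]; omega)
    rw [List.length_reverse] at this
    rw [cA (i + 1) ⟨h.1, by omega, h2⟩, cB i ⟨h.1, by omega, (by omega : i ≤ n (k + 1))⟩]
    linarith
  have hD := T.D0 (k + 1)
  have grow : ∀ i, i + 1 ≤ n (k + 1) →
      S.sA L + (i + 1) * sD n c η (k + 1) + i * w ≤ S.sB ((i + 1) :: L) := by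
    intro i
    induction i with
    | zero =>
      intro h1
      have v : VL (fun k => n (k + 1)) (1 :: L) := ⟨h.1, by omega, h1⟩
      have a1 := T.len _ v
      have a2 := T.left _ h.1
      rw [List.length_cons] at a1
      simp only [zero_add]
      push_cast
      linarith
    | succ i ih =>
      intro h1
      have ih := ih (by omega)
      have v : VL (fun k => n (k + 1)) ((i + 1 + 1) :: L) := ⟨h.1, by omega, h1⟩
      have a1 := T.len _ v
      rw [List.length_cons] at a1
      have a2 := gm (i + 1) (by omega) h1
      have a3 := (S.eta_bounds (k := k + 1) (l := i + 1) (by omega) (by omega) (by omega)).1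
      push_cast
      linarith
  obtain ⟨i, hi⟩ : ∃ i, n (k + 1) = i + 1 := ⟨n (k + 1) - 1, by omega⟩
  have g1 := grow i (by omega)
  rw [← hi] at g1
  have g2 := T.right _ h.1
  have g3 := T.len _ h.1
  have hiR : (i : ℝ) + 1 = n (k + 1) := by rw [hi]; push_cast; ring
  have hi1 : (1 : ℝ) ≤ i := by exact_mod_cast (by omega : 1 ≤ i)
  have g4 : (i + 1) * sD n c η (k + 1) + i * w ≤ sD n c η k := by
    have g2' : S.sB (n (k + 1) :: L) ≤ S.sB L := g2
    linarith
  have hu : (HTree.uu (fun k => n (k + 1)) (sD n c η) k - 1) * sD n c η (k + 1) * (i + 1)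
      = sD n c η k - (i + 1) * sD n c η (k + 1) := by
    simp only [HTree.uu]
    rw [← hiR]
    field_simp
  have g5 : w ≤ 2 * ((HTree.uu (fun k => n (k + 1)) (sD n c η) k - 1) * sD n c η (k + 1)) := by
    set Z := (HTree.uu (fun k => n (k + 1)) (sD n c η) k - 1) * sD n c η (k + 1)
    by_contra hneg
    push Not at hneg
    nlinarith
  have g6 : C * w ≤ 2 * C * (HTree.uu (fun k => n (k + 1)) (sD n c η) k - 1) *
      sD n c η (k + 1) := by
    calc C * w ≤ C * (2 * ((HTree.uu (fun k => n (k + 1)) (sD n c η) k - 1) * sD n c η (k + 1))) :=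
          mul_le_mul_of_nonneg_left g5 (by linarith)
      _ = _ := by ring
  have g7 : w ≤ C * w := by nlinarith
  constructor
  · refine le_trans ?_ g6
    rcases Nat.lt_or_ge 1 j with h3 | h3
    · rw [HTree.pt_mid h3 h.2.2, sub_self]; linarith
    · have : j = 1 := by have := h.2.1; omega
      subst this
      rw [HTree.pt_one, cA 1 h, sA]
      linarith
  · refine le_trans ?_ g6
    rcases Nat.lt_or_ge j (n (k + 1)) with h3 | h3
    · rw [HTree.pt_mid (by have := h.2.1; omega) h3, gm j h.2.1 h3]
      have a3 := (S.eta_bounds (k := k + 1) (l := j) (by omega) h.2.1 (by omega)).2.1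
      have a4 := hgap (k + 1) (by omega)
      nlinarith
    · have : j = n (k + 1) := le_antisymm h.2.2 h3
      have : cellPt (fun k => n (k + 1)) S.sA S.sB L (n (k + 1) + 1) = S.sB L := T.pt_last L
      rw [‹j = n (k + 1)›, this, cB _ (by rw [← ‹j = n (k + 1)›]; exact h), sB]
      linarith

end HomogeneousPerfectStructure

lemma qs_zero {f : ℝ ≃ₜ ℝ} {h : (Set.Ici (0 : ℝ)) ≃ₜ (Set.Ici (0 : ℝ))}
    (hq : ∀ a b x : ℝ, x ≠ a → x ≠ b → a ≠ b →
      |f x - f a| / |f x - f b| ≤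
        (h ⟨|x - a| / |x - b|, Set.mem_Ici.mpr (div_nonneg (abs_nonneg _) (abs_nonneg _))⟩ : ℝ)) :
    (h ⟨0, Set.mem_Ici.mpr le_rfl⟩ : ℝ) = 0 := by
  obtain ⟨⟨z, hz⟩, hz0⟩ := h.surjective ⟨0, Set.mem_Ici.mpr le_rfl⟩
  rcases (show (0:ℝ) ≤ z from hz).eq_or_lt with e | e
  · subst e
    rw [hz0]
  · exfalso
    have h1 := hq z (-1) 0 (by linarith) (by norm_num) (by linarith)
    have e2 : (⟨|0 - z| / |0 - (-1 : ℝ)|, Set.mem_Ici.mpr (div_nonneg (abs_nonneg _) (abs_nonneg _))⟩ : Set.Ici (0 : ℝ)) = ⟨z, hz⟩ := by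
      apply Subtype.ext
      simp [abs_of_pos e]
    rw [e2, hz0] at h1
    have a1 : 0 < |f 0 - f z| := abs_pos.2 (sub_ne_zero.2 (fun h' => by
      have := f.injective h'; linarith))
    have a2 : 0 < |f 0 - f (-1)| := abs_pos.2 (sub_ne_zero.2 (fun h' => by
      have := f.injective h'; linarith))
    have := div_pos a1 a2
    simp only at h1
    linarith

lemma qs_QSF {f : ℝ ≃ₜ ℝ} (hqs : IsQuasisymmetric f) {F : ℝ → ℝ} (hF : StrictMono F)
    (hab : ∀ x y, |f x - f y| = |F x - F y|) : ∃ H, QSF F H := by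
  obtain ⟨h, hq⟩ := hqs
  have h0 := qs_zero hq
  set H1 : ℝ := (h ⟨1, Set.mem_Ici.mpr zero_le_one⟩ : ℝ) with hH1
  have H0 : 0 ≤ H1 := (h ⟨1, Set.mem_Ici.mpr zero_le_one⟩).2
  have key1 : ∀ x a b : ℝ, x ≠ a → x ≠ b → a ≠ b → |x - a| = |x - b| →
      |F x - F a| ≤ H1 * |F x - F b| := by
    intro x a b h1 h2 h3 h4
    have h5 := hq a b x h1 h2 h3
    have e2 : (⟨|x - a| / |x - b|, Set.mem_Ici.mpr (div_nonneg (abs_nonneg _) (abs_nonneg _))⟩ : Set.Ici (0 : ℝ)) = ⟨1, Set.mem_Ici.mpr zero_le_one⟩ := by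
      apply Subtype.ext
      simp only [h4]
      exact div_self (abs_ne_zero.2 (sub_ne_zero.2 h2))
    rw [e2, hab, hab, div_le_iff₀ (abs_pos.2 (sub_ne_zero.2 (hF.injective.ne h2)))] at h5
    exact h5
  have key2 : ∀ ε, 0 < ε → ∃ θ, 0 < θ ∧ ∀ x a b : ℝ, x ≠ a → x ≠ b → a ≠ b →
      |x - a| ≤ θ * |x - b| → |F x - F a| ≤ ε * |F x - F b| := by
    intro ε hε
    have hc := h.continuous.continuousAt (x := ⟨0, Set.mem_Ici.mpr le_rfl⟩)
    rw [Metric.continuousAt_iff] at hc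
    obtain ⟨δ, hδ, hc⟩ := hc ε hε
    refine ⟨δ / 2, by positivity, ?_⟩
    intro x a b h1 h2 h3 h4
    have h5 := hq a b x h1 h2 h3
    have hb : 0 < |x - b| := abs_pos.2 (sub_ne_zero.2 h2)
    have h6 : |x - a| / |x - b| ≤ δ / 2 := (div_le_iff₀ hb).2 h4
    have h7 := @hc ⟨|x - a| / |x - b|, Set.mem_Ici.mpr (div_nonneg (abs_nonneg _) (abs_nonneg _))⟩ (by
      rw [Subtype.dist_eq, Real.dist_eq, sub_zero, abs_of_nonneg (div_nonneg (abs_nonneg _) (abs_nonneg _))]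
      linarith)
    rw [Subtype.dist_eq, Real.dist_eq, h0, sub_zero] at h7
    have h8 := h5.trans ((le_abs_self _).trans h7.le)
    rw [hab, hab, div_le_iff₀ (abs_pos.2 (sub_ne_zero.2 (hF.injective.ne h2)))] at h8
    exact h8
  refine ⟨1 + H1, hF, by linarith, ?_, ?_, ?_, ?_⟩
  · intro x r hr
    have k := key1 (x + r) (x + 2 * r) x (by linarith) (by linarith) (by linarith)
      (by rw [abs_sub_comm, abs_of_pos, abs_of_pos] <;> linarith)
    have a1 := hF (show x < x + r by linarith)
    have a2 := hF (show x + r < x + 2 * r by linarith)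
    rw [abs_sub_comm, abs_of_pos (by linarith), abs_of_pos (by linarith)] at k
    linarith
  · intro x r hr
    have k := key1 (x - r) (x - 2 * r) x (by linarith) (by linarith) (by linarith)
      (by rw [abs_of_pos, abs_sub_comm, abs_of_pos] <;> linarith)
    have a1 := hF (show x - r < x by linarith)
    have a2 := hF (show x - 2 * r < x - r by linarith)
    rw [abs_of_pos (by linarith), abs_sub_comm, abs_of_pos (by linarith)] at k
    linarith
  · intro ε hε
    obtain ⟨θ, hθ, k⟩ := key2 ε hε
    refine ⟨θ, hθ, fun u v w h1 h2 h3 => ?_⟩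
    have a1 := hF h1
    rcases h2.eq_or_lt with e | e
    · subst e
      have : 0 < ε * (F v - F u) := mul_pos hε (by linarith)
      linarith
    · have a2 := hF e
      have k := k v w u e.ne h1.ne' (by linarith)
        (by rwa [abs_sub_comm, abs_of_pos (by linarith), abs_of_pos (by linarith)])
      rwa [abs_sub_comm, abs_of_pos (by linarith), abs_of_pos (by linarith)] at k
  · intro ε hε
    obtain ⟨θ, hθ, k⟩ := key2 ε hε
    refine ⟨θ, hθ, fun u v w h1 h2 h3 => ?_⟩
    have a1 := hF h2
    rcases h1.eq_or_lt with e | e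
    · subst e
      have : 0 < ε * (F w - F u) := mul_pos hε (by linarith)
      linarith
    · have a2 := hF e
      have k := k v u w e.ne' h2.ne (by linarith)
        (by rwa [abs_of_pos (by linarith), abs_sub_comm v w, abs_of_pos (by linarith)])
      rwa [abs_of_pos (by linarith), abs_sub_comm (F v), abs_of_pos (by linarith)] at k

/-- the finite set of valid reversed words of length `k` -/
def Wf (m : ℕ → ℕ) : ℕ → Finset (List ℕ)
  | 0 => {[]}
  | k + 1 => ((Wf m k) ×ˢ (Finset.Icc 1 (m k))).image (fun p => p.2 :: p.1)

lemma Wf_card (m : ℕ → ℕ) (k : ℕ) : (Wf m k).card ≤ ∏ i ∈ Finset.range k, m i := by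
  induction k with
  | zero => simp [Wf]
  | succ k ih =>
    rw [Wf, Finset.prod_range_succ]
    refine Finset.card_image_le.trans ?_
    rw [Finset.card_product, Nat.card_Icc, Nat.add_sub_cancel]
    exact Nat.mul_le_mul_right _ ih

lemma mem_Wf {m : ℕ → ℕ} {k : ℕ} {L : List ℕ} : L ∈ Wf m k ↔ VL m L ∧ L.length = k := by
  induction k generalizing L with
  | zero =>
    rw [Wf, Finset.mem_singleton]
    constructor
    · rintro rfl; exact ⟨trivial, rfl⟩
    · rintro ⟨_, h⟩; exact List.length_eq_zero_iff.1 h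
  | succ k ih =>
    rw [Wf, Finset.mem_image]
    constructor
    · rintro ⟨⟨L', j⟩, h, rfl⟩
      rw [Finset.mem_product, Finset.mem_Icc] at h
      obtain ⟨h1, h2⟩ := ih.1 h.1
      refine ⟨⟨h1, h.2.1, ?_⟩, ?_⟩
      · rw [h2]; exact h.2.2
      · simp [h2]
    · rintro ⟨h, h'⟩
      cases L with
      | nil => simp at h'
      | cons j L =>
        have hl : L.length = k := by simpa using h'
        refine ⟨(L, j), Finset.mem_product.2 ⟨ih.2 ⟨h.1, hl⟩, Finset.mem_Icc.2 ⟨h.2.1, ?_⟩⟩, rfl⟩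
        have := h.2.2
        rwa [hl] at this

namespace HomogeneousPerfectStructure

variable {n : ℕ → ℕ} {c : ℕ → ℝ} {η : ℕ → ℕ → ℝ}

lemma E_cover (S : HomogeneousPerfectStructure n c η) (k : ℕ) :
    S.E ⊆ ⋃ L : ↥(Wf (fun k => n (k + 1)) k), Icc (S.sA L.1) (S.sB L.1) := by
  intro x hx
  have h1 := mem_iInter.1 hx (k + 1)
  obtain ⟨σ, ⟨hv, hl⟩, hx⟩ := mem_iUnion₂.1 h1
  rcases List.eq_nil_or_concat σ with rfl | ⟨τ, i, rfl⟩
  · simp at hl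
  rw [List.concat_eq_append] at *
  obtain ⟨v1, v2, v3⟩ := validWord_snoc.1 hv
  have hl' : τ.length = k := by simpa using hl
  refine mem_iUnion.2 ⟨⟨τ.reverse, mem_Wf.2 ⟨(VL_iff _).2 (by simpa using v1), by simpa using hl'⟩⟩, ?_, ?_⟩
  · have := (S.word_mono v1 (le_refl 1) v2 v3).1
    simp only [sA, List.reverse_reverse]
    exact this.trans hx.1
  · have := (S.word_mono v1 v2 v3 (le_refl _)).2
    simp only [sB, List.reverse_reverse, List.length_reverse]
    exact hx.2.trans this

lemma sD_le (S : HomogeneousPerfectStructure n c η) (k : ℕ) : sD n c η k ≤ (1 / 2 : ℝ) ^ k := by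
  induction k with
  | zero => simpa using S.sD_zero_le
  | succ k ih =>
    have h1 := S.htree.mD' k
    have h2 : (2 : ℝ) ≤ n (k + 1) := by exact_mod_cast S.hn (k + 1) (by omega)
    have h3 := S.htree.D0 (k + 1)
    rw [pow_succ]
    nlinarith

lemma growth (S : HomogeneousPerfectStructure n c η) (hdim : dimH S.E = 1) (s : ℝ) (hs : 0 < s)
    (hs1 : s < 1) : ∀ᶠ k in atTop,
      1 ≤ (∏ i ∈ Finset.range k, ((fun k => n (k + 1)) i : ℝ)) * sD n c η k ^ s := by
  by_contra hcon
  rw [Filter.not_eventually] at hcon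
  set bad : Set ℕ := {k | ¬ 1 ≤ (∏ i ∈ Finset.range k, ((fun k => n (k + 1)) i : ℝ)) * sD n c η k ^ s}
    with hbad
  have hne : (atTop ⊓ 𝓟 bad : Filter ℕ).NeBot := Filter.frequently_iff_neBot.1 hcon
  have T := S.htree
  have hdiam : ∀ k, ∀ L : ↥(Wf (fun k => n (k + 1)) k),
      Metric.ediam (Icc (S.sA L.1) (S.sB L.1)) = ENNReal.ofReal (sD n c η k) := by
    intro k L
    obtain ⟨h1, h2⟩ := mem_Wf.1 L.2
    rw [Real.ediam_Icc, T.len _ h1, h2]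
  have h1 := Measure.hausdorffMeasure_le_liminf_sum (ι := fun k => ↥(Wf (fun k => n (k + 1)) k))
    s S.E (l := atTop ⊓ 𝓟 bad) (fun k => ENNReal.ofReal (sD n c η k))
    (by
      refine Tendsto.mono_left ?_ inf_le_left
      have : Tendsto (fun k => sD n c η k) atTop (nhds 0) :=
        squeeze_zero (fun k => (T.D0 k).le) S.sD_le
          (tendsto_pow_atTop_nhds_zero_of_lt_one (by norm_num) (by norm_num))
      simpa using ENNReal.tendsto_ofReal this)
    (fun k L => Icc (S.sA L.1) (S.sB L.1))
    (Eventually.of_forall (fun k L => (hdiam k L).le))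
    (Eventually.of_forall (fun k => S.E_cover k))
  have h2 : liminf (fun k => ∑ L : ↥(Wf (fun k => n (k + 1)) k),
      Metric.ediam (Icc (S.sA L.1) (S.sB L.1)) ^ s) (atTop ⊓ 𝓟 bad) ≤ 1 := by
    refine Filter.liminf_le_of_frequently_le' (Eventually.frequently ?_)
    refine Filter.eventually_inf_principal.2 (Eventually.of_forall (fun k hk => ?_))
    have hk' := not_le.1 hk
    simp only [hdiam]
    rw [Finset.sum_const, Finset.card_univ, Fintype.card_coe, nsmul_eq_mul,
      ENNReal.ofReal_rpow_of_pos (T.D0 k)]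
    have hc : ((Wf (fun k => n (k + 1)) k).card : ℝ) ≤ ∏ i ∈ Finset.range k, ((fun k => n (k + 1)) i : ℝ) := by
      have := Wf_card (fun k => n (k + 1)) k
      exact_mod_cast this
    rw [← ENNReal.ofReal_natCast, ← ENNReal.ofReal_mul (by positivity)]
    rw [← ENNReal.ofReal_one]
    apply ENNReal.ofReal_le_ofReal
    have hp : 0 ≤ sD n c η k ^ s := (Real.rpow_pos_of_pos (T.D0 k) s).le
    exact (mul_le_mul_of_nonneg_right hc hp).trans hk'.le
  have h3 := dimH_le_of_hausdorffMeasure_ne_top (d := ⟨s, hs.le⟩) (s := S.E)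
    (ne_top_of_le_ne_top ENNReal.one_ne_top (h1.trans h2))
  rw [hdim] at h3
  have h4 : (1 : NNReal) ≤ ⟨s, hs.le⟩ := ENNReal.coe_le_coe.1 (by rwa [ENNReal.coe_one])
  have h5 : (1 : ℝ) ≤ s := h4
  linarith

lemma dim_image (S : HomogeneousPerfectStructure n c η) (hdim : dimH S.E = 1)
    {C : ℝ} (hC : 1 ≤ C) (hgap : ∀ k, 1 ≤ k → etaMax n η k ≤ C * etaMin n η k)
    {F : ℝ → ℝ} {H : ℝ} (hF : QSF F H) : dimH (F '' S.E) = 1 := by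
  have T := S.htree
  apply le_antisymm
  · have h := dimH_mono (subset_univ (F '' S.E))
    rwa [Real.dimH_univ] at h
  · refine le_of_forall_lt (fun q hq => ?_)
    obtain ⟨r, hr1, hr2⟩ := exists_between hq
    have hrt : r ≠ ∞ := (hr2.trans ENNReal.one_lt_top).ne
    have r0 : 0 < r.toReal := ENNReal.toReal_pos (ne_bot_of_gt hr1) hrt
    have r1 : r.toReal < 1 := by
      have := (ENNReal.toReal_lt_toReal hrt ENNReal.one_ne_top).2 hr2
      simpa using this
    obtain ⟨M, hM⟩ := T.exists_KHol hF hC S.sD_zero_le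
      (fun L j h => (S.gaps hC hgap L j h).1) (fun L j h => (S.gaps hC hgap L j h).2)
      (S.growth hdim) r0 r1
    have := T.dim_ge hF r0 r1 hM S.E S.mem_E
    rw [ENNReal.ofReal_toReal hrt] at this
    exact hr1.trans_le this

lemma dim_qs (S : HomogeneousPerfectStructure n c η) (hdim : dimH S.E = 1)
    {C : ℝ} (hC : 1 ≤ C) (hgap : ∀ k, 1 ≤ k → etaMax n η k ≤ C * etaMin n η k)
    (f : ℝ ≃ₜ ℝ) (hf : IsQuasisymmetric f) : dimH (f '' S.E) = 1 := by
  rcases f.continuous.strictMono_of_inj f.injective with h | h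
  · obtain ⟨H, hH⟩ := qs_QSF hf h (fun _ _ => rfl)
    exact S.dim_image hdim hC hgap hH
  · obtain ⟨H, hH⟩ := qs_QSF hf (F := fun x => - f x) (fun x y hxy => neg_lt_neg (h hxy))
      (fun x y => by rw [← abs_neg]; congr 1; ring)
    have h1 := S.dim_image hdim hC hgap hH
    have h2 := (IsometryEquiv.neg ℝ).isometry.dimH_image (f '' S.E)
    rw [← h2, image_image]
    exact h1

end HomogeneousPerfectStructure

/-- Let `E = E(J_∅,{n_k},{c_k},{η_{k,j}})` be a homogeneous perfect set with
`dim_H E = 1`. If there is a constant `C ≥ 1` with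
`max_{1≤l≤n_k−1} η_{k,l} ≤ C · min_{1≤l≤n_k−1} η_{k,l}` for all `k ≥ 1`, then
`dim_H f(E) = 1` for every 1-dimensional quasisymmetric mapping `f`; in particular `E` is
1-dimensional quasisymmetrically minimal. -/
theorem homogeneous_perfect_minimal_of_gap_ratio_bounded
    (n : ℕ → ℕ) (c : ℕ → ℝ) (η : ℕ → ℕ → ℝ)
    (S : HomogeneousPerfectStructure n c η)
    (hdim : dimH S.E = 1)
    (C : ℝ) (hC : 1 ≤ C)
    (hgap : ∀ k, 1 ≤ k → etaMax n η k ≤ C * etaMin n η k) :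
    (∀ f : ℝ ≃ₜ ℝ, IsQuasisymmetric f → dimH (f '' S.E) = 1) ∧
      (∀ f : ℝ ≃ₜ ℝ, IsQuasisymmetric f → dimH S.E ≤ dimH (f '' S.E)) := by
  have h := fun f hf => S.dim_qs hdim hC hgap f hf
  exact ⟨h, fun f hf => by rw [hdim, h f hf]⟩
end

section
/- Let f be a 1-dimensional quasisymmetric mapping. Then there exist constants λ > 0 and p, q with 0 < p ≤ 1 ≤ q, depending only on f, such that λ·(|J|/|I|)^q ≤ |f(J)|/|f(I)| ≤ 4·(|J|/|I|)^p for all nondegenerate compact intervals I, J ⊆ ℝ with J ⊆ I, where |f(I)| denotes the length of the interval f(I). -/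
open Set MeasureTheory

lemma qs_upper_left (F : ℝ → ℝ) (hF : StrictMono F) (c : ℝ) (hc : 1 / 2 ≤ c)
    (h1 : ∀ a b, a < b → F ((a + b) / 2) - F a ≤ c * (F b - F a)) (n : ℕ) :
    ∀ a b d, a ≤ b → a < d → (b - a) * 2 ^ n ≤ d - a → F b - F a ≤ c ^ n * (F d - F a) := by
  induction n with
  | zero =>
    intro a b d _ had h
    have := hF.monotone (show b ≤ d by linarith)
    rw [pow_zero]; linarith
  | succ n ih =>
    intro a b d hab had h
    rw [pow_succ] at h
    have h2 := ih a b ((a + d) / 2) hab (by linarith) (by linarith)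
    have h3 := mul_le_mul_of_nonneg_left (h1 a d had) (show 0 ≤ c ^ n by positivity)
    rw [pow_succ]
    linarith

lemma qs_upper_right (F : ℝ → ℝ) (hF : StrictMono F) (c : ℝ) (hc : 1 / 2 ≤ c)
    (h1 : ∀ a b, a < b → F b - F ((a + b) / 2) ≤ c * (F b - F a)) (n : ℕ) :
    ∀ a b d, b ≤ d → a < d → (d - b) * 2 ^ n ≤ d - a → F d - F b ≤ c ^ n * (F d - F a) := by
  induction n with
  | zero =>
    intro a b d _ had h
    have := hF.monotone (show a ≤ b by linarith)
    rw [pow_zero]; linarith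
  | succ n ih =>
    intro a b d hab had h
    rw [pow_succ] at h
    have h2 := ih ((a + d) / 2) b d hab (by linarith) (by linarith)
    have h3 := mul_le_mul_of_nonneg_left (h1 a d had) (show 0 ≤ c ^ n by positivity)
    rw [pow_succ]
    linarith

lemma qs_upper (F : ℝ → ℝ) (hF : StrictMono F) (c : ℝ) (hc : 1 / 2 ≤ c)
    (h1 : ∀ a b, a < b → F ((a + b) / 2) - F a ≤ c * (F b - F a))
    (h2 : ∀ a b, a < b → F b - F ((a + b) / 2) ≤ c * (F b - F a)) (n : ℕ) :
    ∀ a b x y, a < b → a ≤ x → x < y → y ≤ b → (y - x) * 2 ^ n ≤ b - a →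
      F y - F x ≤ 2 * c ^ n * (F b - F a) := by
  induction n with
  | zero =>
    intro a b x y hab hax hxy hyb _
    have e1 := hF.monotone hax
    have e2 := hF.monotone hyb
    have e3 := hF hab
    simp only [pow_zero]
    linarith
  | succ n ih =>
    intro a b x y hab hax hxy hyb h
    rw [pow_succ] at h
    have hp : 0 ≤ c ^ n := by positivity
    have h1' := mul_le_mul_of_nonneg_left (h1 a b hab) hp
    have h2' := mul_le_mul_of_nonneg_left (h2 a b hab) hp
    rw [pow_succ]
    rcases le_total y ((a + b) / 2) with hy | hy
    · have := ih a ((a + b) / 2) x y (by linarith) hax hxy hy (by linarith)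
      linarith
    rcases le_total ((a + b) / 2) x with hx | hx
    · have := ih ((a + b) / 2) b x y (by linarith) hx hxy hyb (by linarith)
      linarith
    have hpp : (0 : ℝ) < 2 ^ n := by positivity
    have e1 := qs_upper_left F hF c hc h1 n ((a + b) / 2) y b hy (by linarith) (by nlinarith)
    have e2 := qs_upper_right F hF c hc h2 n a x ((a + b) / 2) hx (by linarith) (by nlinarith)
    have e3 : 0 ≤ c ^ n * (F b - F a) := mul_nonneg hp (by linarith [hF hab])
    nlinarith

lemma qs_lower_left (F : ℝ → ℝ) (hF : StrictMono F) (k : ℝ) (hk : 0 < k) (hk1 : k ≤ 1 / 2)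
    (h1 : ∀ a b, a < b → k * (F b - F a) ≤ F ((a + b) / 2) - F a) (n : ℕ) :
    ∀ a b d, a ≤ b → a < d → d - a ≤ (b - a) * 2 ^ n → k ^ n * (F d - F a) ≤ F b - F a := by
  induction n with
  | zero =>
    intro a b d _ had h
    have := hF.monotone (show d ≤ b by linarith)
    rw [pow_zero]; linarith
  | succ n ih =>
    intro a b d hab had h
    rw [pow_succ] at h
    have h2 := ih a b ((a + d) / 2) hab (by linarith) (by linarith)
    have h3 := mul_le_mul_of_nonneg_left (h1 a d had) (show 0 ≤ k ^ n by positivity)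
    rw [pow_succ]
    linarith

lemma qs_lower_right (F : ℝ → ℝ) (hF : StrictMono F) (k : ℝ) (hk : 0 < k) (hk1 : k ≤ 1 / 2)
    (h1 : ∀ a b, a < b → k * (F b - F a) ≤ F b - F ((a + b) / 2)) (n : ℕ) :
    ∀ a b d, b ≤ d → a < d → d - a ≤ (d - b) * 2 ^ n → k ^ n * (F d - F a) ≤ F d - F b := by
  induction n with
  | zero =>
    intro a b d _ had h
    have := hF.monotone (show b ≤ a by linarith)
    rw [pow_zero]; linarith
  | succ n ih =>
    intro a b d hab had h
    rw [pow_succ] at h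
    have h2 := ih ((a + d) / 2) b d hab (by linarith) (by linarith)
    have h3 := mul_le_mul_of_nonneg_left (h1 a d had) (show 0 ≤ k ^ n by positivity)
    rw [pow_succ]
    linarith

lemma qs_lower (F : ℝ → ℝ) (hF : StrictMono F) (k : ℝ) (hk : 0 < k) (hk1 : k ≤ 1 / 2)
    (h1 : ∀ a b, a < b → k * (F b - F a) ≤ F ((a + b) / 2) - F a)
    (h2 : ∀ a b, a < b → k * (F b - F a) ≤ F b - F ((a + b) / 2)) (n : ℕ) :
    ∀ a b x y, a < b → a ≤ x → x < y → y ≤ b → b - a ≤ (y - x) * 2 ^ n →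
      k ^ (n + 1) * (F b - F a) ≤ F y - F x := by
  induction n with
  | zero =>
    intro a b x y hab hax hxy hyb h
    have e1 : x = a := by linarith
    have e2 : y = b := by linarith
    subst e1 e2
    have e3 := hF hab
    simp only [zero_add, pow_one]
    nlinarith
  | succ n ih =>
    intro a b x y hab hax hxy hyb h
    rw [pow_succ] at h
    have hp : 0 ≤ k ^ (n + 1) := by positivity
    have h1' := mul_le_mul_of_nonneg_left (h1 a b hab) hp
    have h2' := mul_le_mul_of_nonneg_left (h2 a b hab) hp
    rw [pow_succ]
    rcases le_total y ((a + b) / 2) with hy | hy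
    · have := ih a ((a + b) / 2) x y (by linarith) hax hxy hy (by linarith)
      linarith
    rcases le_total ((a + b) / 2) x with hx | hx
    · have := ih ((a + b) / 2) b x y (by linarith) hx hxy hyb (by linarith)
      linarith
    have g1 := hF.monotone hx
    have g2 := hF.monotone hy
    have hpp : (0 : ℝ) < 2 ^ n := by positivity
    rcases le_total (y - (a + b) / 2) ((a + b) / 2 - x) with hh | hh
    · have e2 := qs_lower_right F hF k hk hk1 h2 (n + 1) a x ((a + b) / 2) hx (by linarith)
        (by rw [pow_succ]; nlinarith)
      linarith
    · have e1 := qs_lower_left F hF k hk hk1 h1 (n + 1) ((a + b) / 2) y b hy (by linarith)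
        (by rw [pow_succ]; nlinarith)
      linarith

lemma qs_core (F : ℝ → ℝ) (hF : StrictMono F) (k : ℝ) (hk : 0 < k)
    (h1 : ∀ a b, a < b → k * (F b - F a) ≤ F ((a + b) / 2) - F a)
    (h2 : ∀ a b, a < b → k * (F b - F a) ≤ F b - F ((a + b) / 2)) :
    ∃ lam p q : ℝ, 0 < lam ∧ 0 < p ∧ p ≤ 1 ∧ 1 ≤ q ∧
      ∀ x₁ x₂ y₁ y₂ : ℝ, x₁ < x₂ → y₁ < y₂ → Icc y₁ y₂ ⊆ Icc x₁ x₂ →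
        lam * ((y₂ - y₁) / (x₂ - x₁)) ^ q ≤ (F y₂ - F y₁) / (F x₂ - F x₁) ∧
          (F y₂ - F y₁) / (F x₂ - F x₁) ≤ 4 * ((y₂ - y₁) / (x₂ - x₁)) ^ p := by
  have hk1 : k ≤ 1 / 2 := by
    have e1 := h1 0 1 one_pos
    have e2 := h2 0 1 one_pos
    have e3 := hF (one_pos : (0 : ℝ) < 1)
    by_contra hcon
    push Not at hcon
    nlinarith
  have hpow : ∀ s : ℝ, 0 < s → ∀ n : ℕ,
      (((2 : ℝ) ^ n)⁻¹) ^ (-Real.logb 2 s) = s ^ n := by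
    intro s hs n
    rw [Real.inv_rpow (by positivity), ← Real.rpow_neg (by positivity), neg_neg,
      ← Real.rpow_natCast 2 n, ← Real.rpow_mul (by norm_num), mul_comm,
      Real.rpow_mul (by norm_num), Real.rpow_logb (by norm_num) (by norm_num) hs,
      Real.rpow_natCast]
  have hhalf : Real.logb 2 (1 / 2) = -1 := by
    rw [one_div, Real.logb_inv, Real.logb_self_eq_one (by norm_num)]
  have hp0 : 0 < -Real.logb 2 (1 - k) := by
    have := Real.logb_neg (b := 2) (by norm_num) (show 0 < 1 - k by linarith) (by linarith)
    linarith
  have hq1 : 1 ≤ -Real.logb 2 k := by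
    have := Real.logb_le_logb_of_le (b := 2) (by norm_num) hk hk1
    linarith
  refine ⟨k ^ 2, -Real.logb 2 (1 - k), -Real.logb 2 k, by positivity, hp0, ?_, hq1, ?_⟩
  · have := Real.logb_le_logb_of_le (b := 2) (by norm_num) (by norm_num)
      (show 1 / 2 ≤ 1 - k by linarith)
    linarith
  intro a b x y hab hxy hsub
  obtain ⟨hax, hyb⟩ := (Icc_subset_Icc_iff hxy.le).1 hsub
  have hba : 0 < b - a := by linarith
  have hyx : 0 < y - x := by linarith
  set t := (y - x) / (b - a) with ht
  have ht0 : 0 < t := by positivity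
  have ht1 : t ≤ 1 := by rw [ht, div_le_one hba]; linarith
  have hyt : y - x = t * (b - a) := by rw [ht]; field_simp
  obtain ⟨n, hn1, hn2⟩ := exists_nat_pow_near (x := t⁻¹) (y := (2 : ℝ))
    (by rwa [one_le_inv₀ ht0]) (by norm_num)
  have hu : t ≤ ((2 : ℝ) ^ n)⁻¹ := by
    rw [le_inv_comm₀ ht0 (by positivity)]; exact hn1
  have hl : ((2 : ℝ) ^ (n + 1))⁻¹ ≤ t := by
    rw [inv_le_comm₀ (by positivity) ht0]; exact hn2.le
  have hu' : t * 2 ^ n ≤ 1 := by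
    have := mul_le_mul_of_nonneg_right hu (show (0 : ℝ) ≤ 2 ^ n by positivity)
    rwa [inv_mul_cancel₀ (by positivity)] at this
  have hl' : 1 ≤ t * 2 ^ (n + 1) := by
    have := mul_le_mul_of_nonneg_right hl (show (0 : ℝ) ≤ 2 ^ (n + 1) by positivity)
    rwa [inv_mul_cancel₀ (by positivity)] at this
  have hFab : 0 < F b - F a := by linarith [hF hab]
  constructor
  · rw [le_div_iff₀ hFab]
    have e := qs_lower F hF k hk hk1 h1 h2 (n + 1) a b x y hab hax hxy hyb
      (by rw [hyt]; nlinarith)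
    have e2 : t ^ (-Real.logb 2 k) ≤ k ^ n := by
      rw [← hpow k hk n]
      exact Real.rpow_le_rpow ht0.le hu (by linarith)
    refine le_trans (mul_le_mul_of_nonneg_right (mul_le_mul_of_nonneg_left e2 (sq_nonneg k))
      hFab.le) (le_trans (le_of_eq ?_) e)
    ring
  · rw [div_le_iff₀ hFab]
    have e := qs_upper F hF (1 - k) (by linarith)
      (fun a b h => by linarith [h2 a b h]) (fun a b h => by linarith [h1 a b h])
      n a b x y hab hax hxy hyb (by rw [hyt]; nlinarith)
    have e2 : (1 - k) ^ (n + 1) ≤ t ^ (-Real.logb 2 (1 - k)) := by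
      rw [← hpow (1 - k) (by linarith) (n + 1)]
      exact Real.rpow_le_rpow (by positivity) hl hp0.le
    have e3 : 0 ≤ (1 - k) ^ n := pow_nonneg (by linarith) n
    refine le_trans e (mul_le_mul_of_nonneg_right ?_ hFab.le)
    rw [pow_succ] at e2
    nlinarith

lemma qs_volume (f : ℝ ≃ₜ ℝ) (a b : ℝ) (hab : a ≤ b) :
    (volume (f '' Icc a b)).toReal = |f b - f a| := by
  rcases f.continuous.strictMono_of_inj f.injective with hm | hm
  · have : f '' Icc a b = Icc (f a) (f b) := by
      apply Subset.antisymm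
      · rintro _ ⟨x, hx, rfl⟩
        exact ⟨hm.monotone hx.1, hm.monotone hx.2⟩
      · exact intermediate_value_Icc hab f.continuous.continuousOn
    have h := hm.monotone hab
    rw [this, Real.volume_Icc, ENNReal.toReal_ofReal (by linarith), abs_of_nonneg (by linarith)]
  · have : f '' Icc a b = Icc (f b) (f a) := by
      apply Subset.antisymm
      · rintro _ ⟨x, hx, rfl⟩
        exact ⟨hm.antitone hx.2, hm.antitone hx.1⟩
      · exact intermediate_value_Icc' hab f.continuous.continuousOn
    have h := hm.antitone hab
    rw [this, Real.volume_Icc, ENNReal.toReal_ofReal (by linarith), abs_of_nonpos (by linarith)]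
    ring

lemma qs_mid (f : ℝ ≃ₜ ℝ) (hf : IsQuasisymmetric f) : ∃ M : ℝ, 0 < M ∧ ∀ a b, a < b →
    |f ((a + b) / 2) - f a| ≤ M * |f ((a + b) / 2) - f b| ∧
    |f ((a + b) / 2) - f b| ≤ M * |f ((a + b) / 2) - f a| := by
  obtain ⟨h, hh⟩ := hf
  have key : ∀ a b x : ℝ, x ≠ a → x ≠ b → a ≠ b → |x - a| = |x - b| →
      |f x - f a| / |f x - f b| ≤ (h ⟨1, by simp⟩ : ℝ) := by
    intro a b x h1 h2 h3 h4
    have e := hh a b x h1 h2 h3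
    have e1 : |x - a| / |x - b| = 1 := by
      rw [h4]; exact div_self (abs_ne_zero.2 (sub_ne_zero.2 h2))
    simpa only [e1] using e
  have pos : ∀ x y : ℝ, x ≠ y → 0 < |f x - f y| := fun x y hxy =>
    abs_pos.2 (sub_ne_zero.2 (fun e => hxy (f.injective e)))
  refine ⟨(h ⟨1, by simp⟩ : ℝ), ?_, ?_⟩
  · refine lt_of_lt_of_le ?_ (key (-1) 1 0 (by norm_num) (by norm_num) (by norm_num) (by norm_num))
    exact div_pos (pos _ _ (by norm_num)) (pos _ _ (by norm_num))
  · intro a b hab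
    have n1 : (a + b) / 2 ≠ a := by intro e; linarith
    have n2 : (a + b) / 2 ≠ b := by intro e; linarith
    have e : |(a + b) / 2 - a| = |(a + b) / 2 - b| := by
      rw [abs_of_nonneg (by linarith), abs_of_nonpos (by linarith)]; ring
    exact ⟨(div_le_iff₀ (pos _ _ n2)).1 (key a b _ n1 n2 hab.ne e),
      (div_le_iff₀ (pos _ _ n1)).1 (key b a _ n2 n1 hab.ne' e.symm)⟩

/-- If `f` is a 1-dimensional quasisymmetric mapping, then there are
constants `λ > 0` and `0 < p ≤ 1 ≤ q`, depending only on `f`, such that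
`λ (|J|/|I|)^q ≤ |f(J)|/|f(I)| ≤ 4 (|J|/|I|)^p` for all nondegenerate compact intervals
`J ⊆ I ⊆ ℝ`, where `|f(I)|` denotes the length of the interval `f(I)`. -/
theorem quasisymmetric_distortion (f : ℝ ≃ₜ ℝ) (hf : IsQuasisymmetric f) :
    ∃ lam p q : ℝ, 0 < lam ∧ 0 < p ∧ p ≤ 1 ∧ 1 ≤ q ∧
      ∀ x₁ x₂ y₁ y₂ : ℝ, x₁ < x₂ → y₁ < y₂ → Icc y₁ y₂ ⊆ Icc x₁ x₂ →
        lam * ((y₂ - y₁) / (x₂ - x₁)) ^ q ≤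
            (volume (f '' Icc y₁ y₂)).toReal / (volume (f '' Icc x₁ x₂)).toReal ∧
          (volume (f '' Icc y₁ y₂)).toReal / (volume (f '' Icc x₁ x₂)).toReal ≤
            4 * ((y₂ - y₁) / (x₂ - x₁)) ^ p := by
  obtain ⟨M, hM, hmid⟩ := qs_mid f hf
  obtain ⟨F, hF, hFf⟩ : ∃ F : ℝ → ℝ, StrictMono F ∧ ∀ x y, |f x - f y| = |F x - F y| := by
    rcases f.continuous.strictMono_of_inj f.injective with hm | hm
    · exact ⟨f, hm, fun _ _ => rfl⟩
    · refine ⟨fun x => -f x, fun x y h => neg_lt_neg (hm h), fun x y => ?_⟩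
      rw [← abs_neg]
      congr 1
      ring
  have habs : ∀ x y, x < y → |F y - F x| = F y - F x := fun x y h =>
    abs_of_pos (sub_pos.2 (hF h))
  have hmid2 : ∀ a b, a < b → F ((a + b) / 2) - F a ≤ M * (F b - F ((a + b) / 2)) ∧
      F b - F ((a + b) / 2) ≤ M * (F ((a + b) / 2) - F a) := by
    intro a b hab
    have e := hmid a b hab
    rwa [hFf, hFf, abs_sub_comm _ (F b), habs _ _ (show (a + b) / 2 < b by linarith),
      habs _ _ (show a < (a + b) / 2 by linarith)] at e
  obtain ⟨lam, p, q, h1, h2, h3, h4, h5⟩ := qs_core F hF (1 / (M + 1)) (by positivity)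
    (fun a b hab => by
      have := (hmid2 a b hab).2
      rw [one_div, inv_mul_le_iff₀ (by linarith)]
      linarith)
    (fun a b hab => by
      have := (hmid2 a b hab).1
      rw [one_div, inv_mul_le_iff₀ (by linarith)]
      linarith)
  refine ⟨lam, p, q, h1, h2, h3, h4, fun x₁ x₂ y₁ y₂ hx hy hs => ?_⟩
  rw [qs_volume f _ _ hx.le, qs_volume f _ _ hy.le, hFf, hFf, habs _ _ hx, habs _ _ hy]
  exact h5 x₁ x₂ y₁ y₂ hx hy hs
end
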